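/- arXiv:1601.00506 — 3 statements merged into one kernel-verified Lean document; each statement's English description precedes it below -/
import Mathlib

section
/- Let T be a finite tree on n ≥ 4 vertices, and let l1 and l2 denote the number of vertices of T of degree 1 and of degree 2, respectively. Then the minimum cardinality of a set F of unordered pairs of distinct vertices of T, not edges of T, such that the graph T + F is 3-vertex-connected, is exactly ⌈(2·l1 + l2)/2⌉; that is, such a set of size ⌈(2·l1 + l2)/2⌉ exists and no smaller set suffices. -/
/-!
Write `d(T) = ∑ v, (3 - deg v)` for the deficiency of a tree `T` on at least four vertices. Since
all degrees are positive, `d(T) = 2 * l₁ + l₂`.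

*Lower bound.* In a 3-connected graph every vertex has degree at least three, so each `v` lies on at
least `3 - deg v` edges of `F`; summing over `v` gives `d(T) ≤ 2 * |F|` (`defic_le`).

*Upper bound.* By strong induction on the number of vertices there is an augmenting set with
`2 * |F| ≤ d(T) + 1` (`exists_aug`). Two operations preserve 3-connectivity: subdividing an edge
`ab` by a new vertex and joining that vertex to a third vertex `c` (`cut_insert_one`), and
subdividing two distinct edges by new vertices `x`, `y` and joining `x` to `y` (`cut_insert_two`).
They allow an augmentation of a smaller tree to be lifted, at the cost of one more edge:

* if `d(T)` is odd, some vertex has degree two; it is suppressed, and afterwards put back on the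
  tree edge between its neighbours and joined to any other vertex (`step_two`);
* a leaf at a vertex `a` of degree at least four is deleted, and put back so as to subdivide an edge
  of `F` that avoids `a` (`step_leaf`);
* a leaf `w` at a vertex `x` of degree three is deleted and `x` suppressed; then `x` is put back on
  a tree edge and `w` on an edge of `F` (`step_leaf_three`);
* otherwise every leaf hangs at a vertex of degree two, and two such vertices are distinct and
  nonadjacent; both are suppressed, put back, and joined (`step_pair`).

The first reduction lowers `d(T)` by one and makes it even, the others lower it by two. On four
vertices all non-edges are added.

All trees of the induction live on finsets `W` of one fixed vertex type, and connectivity is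
expressed by cuts: every bipartition into two nonempty parts is crossed by an edge.
-/

/-- The degree of a vertex `v` in a simple graph `G`, as the cardinality of its
neighbor set. -/
noncomputable def degN {V : Type*} (G : SimpleGraph V) (v : V) : ℕ :=
  (G.neighborSet v).ncard

/-- A finite simple graph is 3-vertex-connected if removing any set of at most two
vertices leaves a connected induced subgraph. -/
def ThreeConnected {V : Type*} [Fintype V] (G : SimpleGraph V) : Prop :=
  ∀ S : Finset V, S.card ≤ 2 → (G.induce ((S : Set V)ᶜ)).Connected

namespace TreeAug

set_option linter.unusedSectionVars false

variable {V : Type*}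

/-! ### Cuts and operations preserving 3-connectivity -/

/-- After deleting any set `S` of at most `k` vertices, every partition of `W \ S` into two nonempty
parts is crossed by an edge of `G`. The parts are the traces of `A` and of its complement. With at
least four vertices, the case `k = 2` is 3-connectivity, see
`threeConnected_iff_cut`. -/
def Cut (k : ℕ) (W : Finset V) (G : SimpleGraph V) : Prop :=
  ∀ (S : Finset V) (A : Set V), S.card ≤ k →
    (∃ a ∈ W, a ∉ S ∧ a ∈ A) → (∃ b ∈ W, b ∉ S ∧ b ∉ A) →
    ∃ u ∈ W, ∃ v ∈ W, u ∉ S ∧ v ∉ S ∧ u ∈ A ∧ v ∉ A ∧ G.Adj u v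

/-- Deleting an edge costs at most one degree of connectivity: if a cut is crossed by the edge `ab`
alone, delete one of its endpoints instead, choosing it so that both sides stay nonempty. -/
theorem cut_delete_edge [DecidableEq V] {k : ℕ} {W : Finset V} {G H : SimpleGraph V} {a b : V}
    (hG : Cut (k + 1) W G) (hW : k + 3 ≤ W.card)
    (hGH : ∀ u v, G.Adj u v → H.Adj u v ∨ (u = a ∧ v = b ∨ u = b ∧ v = a)) : Cut k W H := by
  intro S A hS h1 h2
  obtain ⟨z, hzW, hz⟩ : ∃ z ∈ W, z ∉ insert a (insert b S) := by
    apply Finset.exists_mem_notMem_of_card_lt_card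
    have := Finset.card_insert_le a (insert b S)
    have := Finset.card_insert_le b S
    omega
  have key : ∀ c, (c = a ∨ c = b) →
      (∃ a ∈ W, a ∉ insert c S ∧ a ∈ A) → (∃ b ∈ W, b ∉ insert c S ∧ b ∉ A) →
      ∃ u ∈ W, ∃ v ∈ W, u ∉ S ∧ v ∉ S ∧ u ∈ A ∧ v ∉ A ∧ H.Adj u v := by
    intro c hc h1 h2
    obtain ⟨u, hu, v, hv, huS, hvS, huA, hvA, huv⟩ :=
      hG (insert c S) A (by have := Finset.card_insert_le c S; omega) h1 h2
    refine ⟨u, hu, v, hv, ?_, ?_, huA, hvA, ?_⟩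
    · grind
    · grind
    · rcases hGH u v huv with h | h
      · exact h
      · grind
  obtain ⟨u, hu, v, hv, huS, hvS, huA, hvA, huv⟩ := hG S A (by omega) h1 h2
  rcases hGH u v huv with h | h
  · exact ⟨u, hu, v, hv, huS, hvS, huA, hvA, h⟩
  · by_cases hzA : z ∈ A
    · exact key u (by grind) ⟨z, hzW, by grind, hzA⟩ ⟨v, hv, by grind, hvA⟩
    · exact key v (by grind) ⟨u, hu, by grind, huA⟩ ⟨z, hzW, by grind, hzA⟩

/-- Subdividing the edge `ab` of a 3-connected graph by `x` and joining `x` to a third vertex `c`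
preserves 3-connectivity. -/
theorem cut_insert_one [DecidableEq V] {W : Finset V} {G G' : SimpleGraph V} {x a b c : V}
    (hx : x ∈ W) (hG' : Cut 2 (W.erase x) G') (hW : 5 ≤ W.card)
    (ha : a ∈ W) (hb : b ∈ W) (hc : c ∈ W) (hab : a ≠ b) (hac : a ≠ c) (hbc : b ≠ c)
    (hxa : G.Adj x a) (hxb : G.Adj x b) (hxc : G.Adj x c)
    (hGG : ∀ u v, G'.Adj u v → G.Adj u v ∨ (u = a ∧ v = b ∨ u = b ∧ v = a)) : Cut 2 W G := by
  have hWc : (W.erase x).card + 1 = W.card := Finset.card_erase_add_one hx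
  have h1 : Cut 1 (W.erase x) G := cut_delete_edge hG' (by omega) hGG
  intro S A hS hA hB
  by_cases hxS : x ∈ S
  · have := Finset.card_erase_add_one hxS
    obtain ⟨u, hu, v, hv, huv⟩ := h1 (S.erase x) A (by omega) (by grind) (by grind)
    exact ⟨u, by grind, v, by grind, by grind⟩
  · obtain ⟨z, hz, hzS⟩ : ∃ z ∈ ({a, b, c} : Finset V), z ∉ S := by
      apply Finset.exists_mem_notMem_of_card_lt_card
      rw [Finset.card_eq_three.2 ⟨a, b, c, hab, hac, hbc, rfl⟩]; omega
    have hzW : z ∈ W := by grind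
    have hxz : G.Adj x z := by grind
    by_cases hA' : ∃ a ∈ W.erase x, a ∉ S ∧ a ∈ A
    · by_cases hB' : ∃ b ∈ W.erase x, b ∉ S ∧ b ∉ A
      · obtain ⟨u, hu, v, hv, huS, hvS, huA, hvA, huv⟩ := hG' S A hS hA' hB'
        rcases hGG u v huv with h | h
        · exact ⟨u, by grind, v, by grind, by grind⟩
        · by_cases hxA : x ∈ A
          · exact ⟨x, hx, v, by grind, hxS, hvS, hxA, hvA, by grind⟩
          · exact ⟨u, by grind, x, hx, huS, hxS, huA, hxA, by grind [G.adj_comm]⟩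
      · have := hxz.ne
        exact ⟨z, hzW, x, hx, hzS, hxS, by grind, by grind, hxz.symm⟩
    · have := hxz.ne
      exact ⟨x, hx, z, hzW, hxS, hzS, by grind, by grind, hxz⟩

/-- The part of `cut_insert_two` in which exactly one of the two subdividing vertices, `x`, belongs
to the deleted set `S`. The graph `G'` on the remaining vertices has only edges of `G` and possibly
`cd`. -/
theorem cut_insert_aux [DecidableEq V] {W : Finset V} {G G' : SimpleGraph V} {x y c d : V}
    (hy : y ∈ W)
    (hG' : Cut 1 ((W.erase x).erase y) G')
    (hc : c ∈ W) (hd : d ∈ W) (hcd : c ≠ d) (hcx : c ≠ x) (hdx : d ≠ x)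
    (hyc : G.Adj y c) (hyd : G.Adj y d)
    (hGG : ∀ u v, G'.Adj u v → G.Adj u v ∨ (u = c ∧ v = d ∨ u = d ∧ v = c))
    (S : Finset V) (A : Set V) (hS : S.card ≤ 2) (hxS : x ∈ S) (hyS : y ∉ S)
    (hA : ∃ a ∈ W, a ∉ S ∧ a ∈ A) (hB : ∃ b ∈ W, b ∉ S ∧ b ∉ A) :
    ∃ u ∈ W, ∃ v ∈ W, u ∉ S ∧ v ∉ S ∧ u ∈ A ∧ v ∉ A ∧ G.Adj u v := by
  have := Finset.card_erase_add_one hxS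
  obtain ⟨z, hz, hzS⟩ : ∃ z ∈ ({c, d} : Finset V), z ∉ S.erase x := by
    apply Finset.exists_mem_notMem_of_card_lt_card
    rw [Finset.card_pair hcd]; omega
  have hzW : z ∈ W := by grind
  have hzS' : z ∉ S := by grind
  have hyz : G.Adj y z := by grind
  have := hyz.ne
  by_cases hA' : ∃ a ∈ (W.erase x).erase y, a ∉ S.erase x ∧ a ∈ A
  · by_cases hB' : ∃ b ∈ (W.erase x).erase y, b ∉ S.erase x ∧ b ∉ A
    · obtain ⟨u, hu, v, hv, huS, hvS, huA, hvA, huv⟩ := hG' (S.erase x) A (by omega) hA' hB'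
      rcases hGG u v huv with h | h
      · exact ⟨u, by grind, v, by grind, by grind⟩
      · by_cases hyA : y ∈ A
        · exact ⟨y, hy, v, by grind, hyS, by grind, hyA, hvA, by grind⟩
        · exact ⟨u, by grind, y, hy, by grind, hyS, huA, hyA, by grind [G.adj_comm]⟩
    · exact ⟨z, hzW, y, hy, hzS', hyS, by grind, by grind, hyz.symm⟩
  · exact ⟨y, hy, z, hzW, hyS, hzS', by grind, by grind, hyz⟩

/-- If `G'` exceeds `G` by at most the two edges `ab` and `cd`, deleting only `ab` leaves a graph
with one degree of connectivity less. -/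
theorem cut_delete_one_of_two [DecidableEq V] {k : ℕ} {W : Finset V} {G G' : SimpleGraph V}
    {a b c d : V} (hG' : Cut (k + 1) W G') (hW : k + 3 ≤ W.card)
    (hGG : ∀ u v, G'.Adj u v → G.Adj u v ∨ (u = a ∧ v = b ∨ u = b ∧ v = a) ∨
      (u = c ∧ v = d ∨ u = d ∧ v = c)) :
    ∃ H : SimpleGraph V, Cut k W H ∧
      ∀ u v, H.Adj u v → G.Adj u v ∨ (u = c ∧ v = d ∨ u = d ∧ v = c) := by
  refine ⟨G ⊔ SimpleGraph.edge c d, cut_delete_edge (a := a) (b := b) hG' hW ?_, ?_⟩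
  · intro u v h
    rw [SimpleGraph.sup_adj, SimpleGraph.edge_adj]
    rcases hGG u v h with h1 | h1 | h1
    · exact Or.inl (Or.inl h1)
    · exact Or.inr h1
    · exact Or.inl (Or.inr ⟨h1, h.ne⟩)
  · intro u v h
    rw [SimpleGraph.sup_adj, SimpleGraph.edge_adj] at h
    exact h.imp_right And.left

/-- Subdividing two distinct edges `ab` and `cd` of a 3-connected graph by `x` and `y`, and joining
`x` to `y`, preserves 3-connectivity. The edges may share an endpoint. -/
theorem cut_insert_two [DecidableEq V] {W : Finset V} {G G' : SimpleGraph V} {x y a b c d : V}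
    (hx : x ∈ W) (hy : y ∈ W) (hG' : Cut 2 ((W.erase x).erase y) G') (hW : 6 ≤ W.card)
    (ha : a ∈ W) (hb : b ∈ W) (hc : c ∈ W) (hd : d ∈ W)
    (hab : a ≠ b) (hcd : c ≠ d) (hne : ¬ (a = c ∧ b = d)) (hne' : ¬ (a = d ∧ b = c))
    (hay : a ≠ y) (hby : b ≠ y) (hcx : c ≠ x) (hdx : d ≠ x)
    (hxy : G.Adj x y)
    (hxa : G.Adj x a) (hxb : G.Adj x b) (hyc : G.Adj y c) (hyd : G.Adj y d)
    (hGG : ∀ u v, G'.Adj u v → G.Adj u v ∨ (u = a ∧ v = b ∨ u = b ∧ v = a) ∨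
      (u = c ∧ v = d ∨ u = d ∧ v = c)) :
    Cut 2 W G := by
  have hxy' := hxy.ne
  have hWc : (W.erase x).card + 1 = W.card := Finset.card_erase_add_one hx
  have hWc' : ((W.erase x).erase y).card + 1 = (W.erase x).card :=
    Finset.card_erase_add_one (by grind)
  intro S A hS hA hB
  obtain ⟨H₁, hH₁, hHE₁⟩ := cut_delete_one_of_two hG' (by omega) hGG
  obtain ⟨H₂, hH₂, hHE₂⟩ := cut_delete_one_of_two hG' (by omega)
    (fun u v h => (hGG u v h).imp_right Or.symm)
  by_cases hxS : x ∈ S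
  · by_cases hyS : y ∈ S
    · have h0 : Cut 0 ((W.erase x).erase y) G := cut_delete_edge hH₁ (by omega) hHE₁
      have := Finset.card_erase_add_one hxS
      have := Finset.card_erase_add_one (s := S.erase x) (a := y) (by grind)
      clear hGG hHE₁ hHE₂
      obtain ⟨u, hu, v, hv, huv⟩ := h0 ((S.erase x).erase y) A (by omega) (by grind) (by grind)
      exact ⟨u, by grind, v, by grind, by grind⟩
    · exact cut_insert_aux hy hH₁ hc hd hcd hcx hdx hyc hyd hHE₁ S A hS hxS hyS hA hB
  · by_cases hyS : y ∈ S
    · refine cut_insert_aux hx ?_ ha hb hab hay hby hxa hxb hHE₂ S A hS hyS hxS hA hB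
      rw [Finset.erase_right_comm]; exact hH₂
    · clear hHE₁ hHE₂
      -- If `x` and `y` are separated, the edge `xy` crosses the cut. Otherwise some neighbour `z`
      -- of one of them survives, since two distinct edges have at least three endpoints.
      by_cases hxyA : x ∈ A ↔ y ∈ A
      · obtain ⟨z, hz, hzS⟩ : ∃ z ∈ ({a, b, c, d} : Finset V), z ∉ S := by
          apply Finset.exists_mem_notMem_of_card_lt_card
          obtain ⟨e, he⟩ : ∃ e, (e = c ∨ e = d) ∧ a ≠ e ∧ b ≠ e := by
            by_cases h : a ≠ c ∧ b ≠ c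
            · exact ⟨c, by grind⟩
            · exact ⟨d, by grind⟩
          have : ({a, b, e} : Finset V).card = 3 :=
            Finset.card_eq_three.2 ⟨a, b, e, hab, he.2.1, he.2.2, rfl⟩
          have : ({a, b, e} : Finset V).card ≤ ({a, b, c, d} : Finset V).card :=
            Finset.card_le_card (by grind)
          omega
        have hzW : z ∈ W := by grind
        obtain ⟨t, ht, htz⟩ : ∃ t, (t = x ∨ t = y) ∧ G.Adj t z := by
          simp only [Finset.mem_insert, Finset.mem_singleton] at hz
          rcases hz with rfl | rfl | rfl | rfl
          exacts [⟨x, by simp, hxa⟩, ⟨x, by simp, hxb⟩, ⟨y, by simp, hyc⟩, ⟨y, by simp, hyd⟩]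
        have hzx : z ≠ x := by have := hxa.ne; have := hxb.ne; grind
        have hzy : z ≠ y := by have := hyc.ne; have := hyd.ne; grind
        by_cases hA' : ∃ a ∈ (W.erase x).erase y, a ∉ S ∧ a ∈ A
        · by_cases hB' : ∃ b ∈ (W.erase x).erase y, b ∉ S ∧ b ∉ A
          · obtain ⟨u, hu, v, hv, huS, hvS, huA, hvA, huv⟩ := hG' S A hS hA' hB'
            obtain ⟨r, hr, hur⟩ : ∃ r, (r = x ∨ r = y) ∧ (G.Adj u v ∨ G.Adj u r ∧ G.Adj r v) := by
              rcases hGG u v huv with h | (⟨rfl, rfl⟩ | ⟨rfl, rfl⟩) | (⟨rfl, rfl⟩ | ⟨rfl, rfl⟩)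
              · exact ⟨x, by simp, Or.inl h⟩
              · exact ⟨x, by simp, Or.inr ⟨hxa.symm, hxb⟩⟩
              · exact ⟨x, by simp, Or.inr ⟨hxb.symm, hxa⟩⟩
              · exact ⟨y, by simp, Or.inr ⟨hyc.symm, hyd⟩⟩
              · exact ⟨y, by simp, Or.inr ⟨hyd.symm, hyc⟩⟩
            clear hGG
            rcases hur with h | h
            · exact ⟨u, by grind, v, by grind, by grind⟩
            · by_cases hrA : r ∈ A
              · exact ⟨r, by grind, v, by grind, by grind⟩
              · exact ⟨u, by grind, r, by grind, by grind⟩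
          · exact ⟨z, hzW, t, by grind, hzS, by grind, by grind, by grind, htz.symm⟩
        · exact ⟨t, by grind, z, hzW, by grind, hzS, by grind, by grind, htz⟩
      · by_cases hxA : x ∈ A
        · exact ⟨x, hx, y, hy, hxS, hyS, hxA, by grind, hxy⟩
        · exact ⟨y, hy, x, hx, hyS, hxS, by grind, hxA, hxy.symm⟩

/-- In a 3-connected graph no two vertices cover all neighbours of a vertex: every degree is at
least three. -/
theorem Cut.exists_nbr [DecidableEq V] {W : Finset V} {G : SimpleGraph V} (hG : Cut 2 W G)
    (hW : 4 ≤ W.card) {u : V} (hu : u ∈ W) {S : Finset V} (hS : S.card ≤ 2) (huS : u ∉ S) :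
    ∃ v ∈ W, v ∉ S ∧ G.Adj u v := by
  obtain ⟨z, hzW, hz⟩ : ∃ z ∈ W, z ∉ insert u S := by
    apply Finset.exists_mem_notMem_of_card_lt_card
    have := Finset.card_insert_le u S
    omega
  obtain ⟨p, hp, q, hq, h⟩ := hG S {u} hS ⟨u, hu, huS, rfl⟩ ⟨z, hzW, by grind, by grind⟩
  exact ⟨q, hq, h.2.1, by grind⟩

/-! ### Trees on finsets and suppression of vertices -/

/-- `T` is a tree with vertex set `W`: its edges lie in `W`, every cut of `W` is crossed by an edge,
every edge is a bridge (it is the only edge crossing some cut `A`), and the degree sum is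
`2 * (|W| - 1)`. For nonempty `W` the last condition follows from the others; as a field it is easy to
carry through the reductions. -/
structure TreeOn (W : Finset V) (T : SimpleGraph V) : Prop where
  supp : ∀ {u v}, T.Adj u v → u ∈ W
  conn : ∀ A : Set V, (∃ a ∈ W, a ∈ A) → (∃ b ∈ W, b ∉ A) → ∃ u v, T.Adj u v ∧ u ∈ A ∧ v ∉ A
  bridge : ∀ {u v}, T.Adj u v → ∃ A : Set V, u ∈ A ∧ v ∉ A ∧
    ∀ p q, T.Adj p q → p ∈ A → q ∉ A → p = u ∧ q = v
  sum : ∑ v ∈ W, degN T v + 2 = 2 * W.card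

/-- Remove `x` and join its former neighbours pairwise. For a leaf `x` this deletes `x`; for a
vertex of degree two it contracts the path through `x` to a single edge. -/
def suppress (T : SimpleGraph V) (x : V) : SimpleGraph V where
  Adj u v := u ≠ v ∧ u ≠ x ∧ v ≠ x ∧ (T.Adj u v ∨ (T.Adj x u ∧ T.Adj x v))
  symm := ⟨by
    rintro u v ⟨h1, h2, h3, h4⟩
    exact ⟨h1.symm, h3, h2, h4.imp (fun h => h.symm) And.symm⟩⟩
  loopless := ⟨fun u h => h.1 rfl⟩

theorem suppress_adj {T : SimpleGraph V} {x u v : V} : (suppress T x).Adj u v ↔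
    u ≠ v ∧ u ≠ x ∧ v ≠ x ∧ (T.Adj u v ∨ (T.Adj x u ∧ T.Adj x v)) := Iff.rfl

/-- The total deficiency: the number of further edge ends needed to bring every degree in `W` up to
three. Truncated subtraction is intended, as vertices of degree above three contribute nothing. -/
noncomputable def defic (W : Finset V) (T : SimpleGraph V) : ℕ := ∑ v ∈ W, (3 - degN T v)

/-- A tree has no triangles. -/
theorem TreeOn.not_adj {W : Finset V} {T : SimpleGraph V} (hT : TreeOn W T) {x a b : V}
    (ha : T.Adj x a) (hb : T.Adj x b) : ¬ T.Adj a b := by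
  intro h
  obtain ⟨A, h1, h2, h3⟩ := hT.bridge h
  by_cases hx : x ∈ A
  · have := (h3 x b hb hx h2).1
    exact ha.ne this
  · have := (h3 a x ha.symm h1 hx).2
    exact hb.ne this

theorem TreeOn.suppress_conn {W : Finset V} {T : SimpleGraph V} (hT : TreeOn W T) (x : V)
    [DecidableEq V] (A : Set V) (hA : ∃ a ∈ W.erase x, a ∈ A) (hB : ∃ b ∈ W.erase x, b ∉ A) :
    ∃ u v, (suppress T x).Adj u v ∧ u ∈ A ∧ v ∉ A := by
  obtain ⟨a, ha, haA⟩ := hA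
  obtain ⟨b, hb, hbA⟩ := hB
  rw [Finset.mem_erase] at ha hb
  obtain ⟨u, v, huv, hu, hv⟩ := hT.conn (insert x A) ⟨a, ha.2, by simp [haA]⟩
    ⟨b, hb.2, by simp [hbA, hb.1]⟩
  obtain ⟨p, q, hpq, hp, hq⟩ := hT.conn (A \ {x}) ⟨a, ha.2, by simp [haA, ha.1]⟩
    ⟨b, hb.2, by simp [hbA]⟩
  simp only [Set.mem_insert_iff, not_or, Set.mem_sdiff, Set.mem_singleton_iff] at hu hv hp hq
  have hpq' := hpq.ne
  have huv' := huv.ne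
  by_cases hux : u = x
  · by_cases hqx : q = x
    · subst hux; subst hqx
      exact ⟨p, v, ⟨by grind, hp.2, hv.1, Or.inr ⟨hpq.symm, huv⟩⟩, hp.1, hv.2⟩
    · exact ⟨p, q, ⟨hpq', hp.2, hqx, Or.inl hpq⟩, hp.1, by grind⟩
  · exact ⟨u, v, ⟨huv', hux, hv.1, Or.inl huv⟩, by grind, hv.2⟩

theorem TreeOn.suppress_bridge {W : Finset V} {T : SimpleGraph V} (hT : TreeOn W T) {x a b : V}
    (hx : ∀ v, T.Adj x v → v = a ∨ v = b) {u v : V} (huv : (suppress T x).Adj u v) :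
    ∃ A : Set V, u ∈ A ∧ v ∉ A ∧
      ∀ p q, (suppress T x).Adj p q → p ∈ A → q ∉ A → p = u ∧ q = v := by
  obtain ⟨h1, h2, h3, h4⟩ := huv
  rcases h4 with h | ⟨hu, hv⟩
  · obtain ⟨A, hA1, hA2, hA3⟩ := hT.bridge h
    refine ⟨A, hA1, hA2, ?_⟩
    rintro p q ⟨h5, h6, h7, h8 | ⟨hp, hq⟩⟩ hpA hqA
    · exact hA3 p q h8 hpA hqA
    · exfalso
      by_cases hxA : x ∈ A
      · exact h2 (hA3 x q hq hxA hqA).1.symm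
      · exact h3 (hA3 p x hp.symm hpA hxA).2.symm
  · obtain ⟨A, hA1, hA2, hA3⟩ := hT.bridge hu.symm
    have hvA : v ∉ A := fun hvA => h1 (hA3 v x hv.symm hvA hA2).1.symm
    refine ⟨A, hA1, hvA, ?_⟩
    rintro p q ⟨h5, h6, h7, h8 | ⟨hp, hq⟩⟩ hpA hqA
    · exact absurd (hA3 p q h8 hpA hqA).2 h7
    · have := hx p hp
      have := hx q hq
      have := hx u hu
      have := hx v hv
      grind

theorem degN_suppress_other {T : SimpleGraph V} {x v : V} (hv : v ≠ x) (hxv : ¬ T.Adj x v) :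
    degN (suppress T x) v = degN T v := by
  unfold degN
  congr 1
  ext w
  simp only [SimpleGraph.mem_neighborSet, suppress_adj]
  constructor
  · rintro ⟨h1, h2, h3, h4 | h4⟩
    · exact h4
    · exact absurd h4.1 hxv
  · intro h
    refine ⟨h.ne, hv, ?_, Or.inl h⟩
    rintro rfl
    exact hxv h.symm

theorem degN_suppress_leaf [Fintype V] {T : SimpleGraph V} {x a : V}
    (hx : ∀ v, T.Adj x v ↔ v = a) : degN (suppress T x) a + 1 = degN T a := by
  have hxa : T.Adj x a := (hx a).2 rfl
  have : (suppress T x).neighborSet a = T.neighborSet a \ {x} := by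
    ext w
    simp only [SimpleGraph.mem_neighborSet, suppress_adj, hx, Set.mem_sdiff, Set.mem_singleton_iff]
    constructor
    · rintro ⟨h1, h2, h3, h4 | h4⟩
      · exact ⟨h4, h3⟩
      · exact absurd h4.2.symm h1
    · rintro ⟨h1, h2⟩
      exact ⟨h1.ne, hxa.ne', h2, Or.inl h1⟩
  unfold degN
  rw [this]
  exact Set.ncard_sdiff_singleton_add_one hxa.symm (Set.toFinite _)

theorem degN_suppress_two [Fintype V] {T : SimpleGraph V} {x a b : V} (hab : a ≠ b)
    (hx : ∀ v, T.Adj x v ↔ v = a ∨ v = b) (hnab : ¬ T.Adj a b) :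
    degN (suppress T x) a = degN T a := by
  have hxa : T.Adj x a := (hx a).2 (Or.inl rfl)
  have hxb : T.Adj x b := (hx b).2 (Or.inr rfl)
  have : (suppress T x).neighborSet a = insert b (T.neighborSet a \ {x}) := by
    ext w
    simp only [SimpleGraph.mem_neighborSet, suppress_adj, hx, Set.mem_sdiff, Set.mem_singleton_iff,
      Set.mem_insert_iff]
    constructor
    · rintro ⟨h1, h2, h3, h4 | h4⟩
      · exact Or.inr ⟨h4, h3⟩
      · exact Or.inl (h4.2.resolve_left (fun h => h1 h.symm))
    · rintro (rfl | ⟨h1, h2⟩)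
      · exact ⟨hab, hxa.ne', hxb.ne', Or.inr ⟨Or.inl trivial, Or.inr rfl⟩⟩
      · exact ⟨h1.ne, hxa.ne', h2, Or.inl h1⟩
  unfold degN
  rw [this, Set.ncard_insert_of_notMem _ (Set.toFinite _),
    Set.ncard_sdiff_singleton_add_one (s := T.neighborSet a) hxa.symm (Set.toFinite _)]
  rintro ⟨h, -⟩
  exact hnab h

theorem degN_eq_one {T : SimpleGraph V} {x : V} (h : degN T x = 1) :
    ∃ a, ∀ v, T.Adj x v ↔ v = a := by
  obtain ⟨a, ha⟩ := Set.ncard_eq_one.1 h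
  exact ⟨a, fun v => by rw [← SimpleGraph.mem_neighborSet, ha, Set.mem_singleton_iff]⟩

theorem degN_eq_two {T : SimpleGraph V} {x : V} (h : degN T x = 2) :
    ∃ a b, a ≠ b ∧ ∀ v, T.Adj x v ↔ v = a ∨ v = b := by
  obtain ⟨a, b, hab, ha⟩ := Set.ncard_eq_two.1 h
  exact ⟨a, b, hab, fun v => by
    rw [← SimpleGraph.mem_neighborSet, ha, Set.mem_insert_iff, Set.mem_singleton_iff]⟩

theorem degN_of_one {T : SimpleGraph V} {x a : V} (h : ∀ v, T.Adj x v ↔ v = a) : degN T x = 1 := by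
  refine Set.ncard_eq_one.2 ⟨a, ?_⟩
  ext v
  simp [h]

theorem degN_of_two {T : SimpleGraph V} {x a b : V} (hab : a ≠ b)
    (h : ∀ v, T.Adj x v ↔ v = a ∨ v = b) : degN T x = 2 := by
  refine Set.ncard_eq_two.2 ⟨a, b, hab, ?_⟩
  ext v
  simp [h]

theorem TreeOn.one_le_degN [Fintype V] {W : Finset V} {T : SimpleGraph V} (hT : TreeOn W T)
    (hW : 2 ≤ W.card) {v : V} (hv : v ∈ W) : 1 ≤ degN T v := by
  obtain ⟨w, hw, hwv⟩ := Finset.exists_mem_ne (by omega : 1 < W.card) v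
  obtain ⟨p, q, hpq, hp, hq⟩ := hT.conn {v} ⟨v, hv, rfl⟩ ⟨w, hw, hwv⟩
  rw [Set.mem_singleton_iff] at hp
  subst hp
  exact (Set.ncard_pos (Set.toFinite _)).2 ⟨q, hpq⟩

/-- A finset that meets `W` and is closed under adjacency contains `W`. -/
theorem TreeOn.card_le {W : Finset V} {T : SimpleGraph V} (hT : TreeOn W T) (C : Finset V)
    {c : V} (hc : c ∈ C) (hcW : c ∈ W) (hC : ∀ u ∈ C, ∀ v, T.Adj u v → v ∈ C) :
    W.card ≤ C.card := by
  apply Finset.card_le_card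
  intro w hw
  by_contra hwC
  obtain ⟨u, v, huv, hu, hv⟩ := hT.conn (C : Set V) ⟨c, hcW, hc⟩ ⟨w, hw, hwC⟩
  exact hv (hC u hu v huv)

section
variable [Fintype V] [DecidableEq V] {W : Finset V} {T : SimpleGraph V} {x a b : V}

/-- Compares a sum over `W` with the sum over `W` without the leaf `x`, for summands that differ
only at `x` and at its neighbour `a`. -/
theorem TreeOn.sum_leaf (hT : TreeOn W T) (hx : ∀ v, T.Adj x v ↔ v = a) (f g : V → ℕ)
    (hfg : ∀ v, v ≠ x → v ≠ a → f v = g v) :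
    ∑ v ∈ W.erase x, f v + (g a + g x) = ∑ v ∈ W, g v + f a := by
  have hxa : T.Adj x a := (hx a).2 rfl
  have hxW := hT.supp hxa
  have haW : a ∈ W.erase x := Finset.mem_erase.2 ⟨hxa.ne', hT.supp hxa.symm⟩
  rw [← Finset.add_sum_erase W g hxW, ← Finset.add_sum_erase _ g haW,
    ← Finset.add_sum_erase _ f haW]
  have : ∑ v ∈ (W.erase x).erase a, f v = ∑ v ∈ (W.erase x).erase a, g v :=
    Finset.sum_congr rfl (fun v hv => hfg v (by grind) (by grind))
  omega

theorem TreeOn.suppress_leaf (hT : TreeOn W T) (hx : ∀ v, T.Adj x v ↔ v = a) :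
    TreeOn (W.erase x) (suppress T x) where
  supp h := Finset.mem_erase.2 ⟨h.2.1, by
    rcases h.2.2.2 with h | h
    · exact hT.supp h
    · exact hT.supp h.1.symm⟩
  conn := hT.suppress_conn x
  bridge h := hT.suppress_bridge (a := a) (b := a) (fun v hv => by simp [(hx v).1 hv]) h
  sum := by
    have hxa : T.Adj x a := (hx a).2 rfl
    have h1 := hT.sum_leaf hx (degN (suppress T x)) (degN T)
      (fun v h1 h2 => degN_suppress_other h1 (by rw [hx]; exact h2))
    have h2 := degN_suppress_leaf hx
    have h3 := degN_of_one hx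
    have h4 := Finset.card_erase_add_one (hT.supp hxa)
    have h5 := hT.sum
    omega

theorem TreeOn.degN_suppress_two (hT : TreeOn W T) (hab : a ≠ b)
    (hx : ∀ v, T.Adj x v ↔ v = a ∨ v = b) {v : V} (hv : v ≠ x) :
    degN (suppress T x) v = degN T v := by
  have hn := hT.not_adj ((hx a).2 (Or.inl rfl)) ((hx b).2 (Or.inr rfl))
  by_cases hva : v = a
  · subst hva
    exact TreeAug.degN_suppress_two hab hx hn
  by_cases hvb : v = b
  · subst hvb
    exact TreeAug.degN_suppress_two hab.symm (fun v => (hx v).trans Or.comm)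
      (fun h => hn h.symm)
  exact degN_suppress_other hv (by rw [hx]; tauto)

theorem TreeOn.suppress_two (hT : TreeOn W T) (hab : a ≠ b)
    (hx : ∀ v, T.Adj x v ↔ v = a ∨ v = b) : TreeOn (W.erase x) (suppress T x) where
  supp h := Finset.mem_erase.2 ⟨h.2.1, by
    rcases h.2.2.2 with h | h
    · exact hT.supp h
    · exact hT.supp h.1.symm⟩
  conn := hT.suppress_conn x
  bridge h := hT.suppress_bridge (fun v hv => (hx v).1 hv) h
  sum := by
    have hxa : T.Adj x a := (hx a).2 (Or.inl rfl)
    have h1 : ∑ v ∈ W.erase x, degN (suppress T x) v = ∑ v ∈ W.erase x, degN T v :=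
      Finset.sum_congr rfl (fun v hv => hT.degN_suppress_two hab hx (by grind))
    have h2 := Finset.add_sum_erase W (degN T) (hT.supp hxa)
    have h3 := degN_of_two hab hx
    have h4 := Finset.card_erase_add_one (hT.supp hxa)
    have h5 := hT.sum
    omega

theorem TreeOn.defic_two (hT : TreeOn W T) (hab : a ≠ b)
    (hx : ∀ v, T.Adj x v ↔ v = a ∨ v = b) :
    defic (W.erase x) (suppress T x) + 1 = defic W T := by
  have hxa : T.Adj x a := (hx a).2 (Or.inl rfl)
  unfold defic
  rw [← Finset.add_sum_erase W _ (hT.supp hxa), degN_of_two hab hx,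
    Finset.sum_congr rfl (fun v hv => by rw [hT.degN_suppress_two hab hx (by grind)])]
  omega

/-- Both terms `3 - deg a` and `4 - deg a` vanish when `deg a ≥ 4`, so the deficiency drops by two;
when `deg a = 3` it drops by one. -/
theorem TreeOn.defic_leaf (hT : TreeOn W T) (hx : ∀ v, T.Adj x v ↔ v = a) :
    defic (W.erase x) (suppress T x) + (3 - degN T a) + 2 = defic W T + (4 - degN T a) := by
  have h1 := hT.sum_leaf hx (fun v => 3 - degN (suppress T x) v) (fun v => 3 - degN T v)
    (fun v h1 h2 => by rw [degN_suppress_other h1 (by rw [hx]; exact h2)])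
  have h2 := degN_suppress_leaf hx
  have h3 := degN_of_one hx
  unfold defic
  omega

end

/-! ### Augmentations and their lifting to larger trees -/

/-- `F` is a set of non-edges of `T` inside `W` whose addition makes `T` 3-connected on `W`. -/
structure IsAug (W : Finset V) (T : SimpleGraph V) (F : Finset (Sym2 V)) : Prop where
  mem : ∀ {u v}, s(u, v) ∈ F → u ∈ W ∧ v ∈ W ∧ u ≠ v ∧ ¬ T.Adj u v
  cut : Cut 2 W (T ⊔ SimpleGraph.fromEdgeSet (F : Set (Sym2 V)))

theorem aug_adj {T : SimpleGraph V} {F : Finset (Sym2 V)} {u v : V} :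
    (T ⊔ SimpleGraph.fromEdgeSet (F : Set (Sym2 V))).Adj u v ↔
      T.Adj u v ∨ (s(u, v) ∈ F ∧ u ≠ v) := by
  rw [SimpleGraph.sup_adj, SimpleGraph.fromEdgeSet_adj, Finset.mem_coe]

section
variable [Fintype V] [DecidableEq V] {W : Finset V} {T : SimpleGraph V} {F : Finset (Sym2 V)}

/-- Some edge of `F` avoids a given non-leaf `v`: a leaf of `T` has degree at least three in the
augmented graph, so it lies on two edges of `F`, and only one of these can contain `v`. -/
theorem IsAug.exists_edge (hF : IsAug W T F) (hT : TreeOn W T) (hW : 4 ≤ W.card) {v : V}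
    (hv : degN T v ≠ 1) : ∃ p q, s(p, q) ∈ F ∧ p ≠ v ∧ q ≠ v := by
  obtain ⟨u, hu, hu1⟩ : ∃ u ∈ W, degN T u < 2 := by
    apply Finset.exists_lt_of_sum_lt
    have := hT.sum
    rw [Finset.sum_const, smul_eq_mul]
    omega
  have := hT.one_le_degN (by omega) hu
  obtain ⟨a, ha⟩ := degN_eq_one (by omega : degN T u = 1)
  have hua : T.Adj u a := (ha a).2 rfl
  have huv : u ≠ v := by rintro rfl; omega
  obtain ⟨q, hq, hqS, huq⟩ := hF.cut.exists_nbr hW hu (S := {v, a}) Finset.card_le_two (by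
    have := hua.ne
    grind)
  rw [aug_adj, ha] at huq
  simp only [Finset.mem_insert, Finset.mem_singleton, not_or] at hqS
  exact ⟨u, q, (huq.resolve_left hqS.2).1, huv, hqS.1⟩

/-- Lifts an augmentation from `T` with the degree-two vertex `x` suppressed. -/
theorem step_two {x a b : V} (hT : TreeOn W T) (hW : 5 ≤ W.card) (hab : a ≠ b)
    (hx : ∀ v, T.Adj x v ↔ v = a ∨ v = b) (hF : IsAug (W.erase x) (suppress T x) F) :
    ∃ F' : Finset (Sym2 V), IsAug W T F' ∧ F'.card ≤ F.card + 1 := by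
  have hxa : T.Adj x a := (hx a).2 (Or.inl rfl)
  have hxb : T.Adj x b := (hx b).2 (Or.inr rfl)
  have hxW := hT.supp hxa
  obtain ⟨c, hcW, hc⟩ : ∃ c ∈ W, c ∉ ({x, a, b} : Finset V) := by
    apply Finset.exists_mem_notMem_of_card_lt_card
    have := Finset.card_le_three (a := x) (b := a) (c := b)
    omega
  simp only [Finset.mem_insert, Finset.mem_singleton, not_or] at hc
  refine ⟨insert s(x, c) F, ⟨?_, ?_⟩, Finset.card_insert_le _ _⟩
  · intro u v huv
    rcases Finset.mem_insert.1 huv with h | h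
    · have hxc : ¬ T.Adj x c := by rw [hx]; tauto
      rcases Sym2.eq_iff.1 h with ⟨rfl, rfl⟩ | ⟨rfl, rfl⟩
      · exact ⟨hxW, hcW, Ne.symm hc.1, hxc⟩
      · exact ⟨hcW, hxW, hc.1, fun h => hxc h.symm⟩
    · obtain ⟨h1, h2, h3, h4⟩ := hF.mem h
      rw [Finset.mem_erase] at h1 h2
      exact ⟨h1.2, h2.2, h3, fun h => h4 ⟨h3, h1.1, h2.1, Or.inl h⟩⟩
  · refine cut_insert_one (a := a) (b := b) (c := c) hxW hF.cut hW (hT.supp hxa.symm)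
      (hT.supp hxb.symm) hcW hab (Ne.symm hc.2.1) (Ne.symm hc.2.2) (aug_adj.2 (Or.inl hxa))
      (aug_adj.2 (Or.inl hxb)) (aug_adj.2 (Or.inr ⟨by simp, Ne.symm hc.1⟩)) ?_
    intro u v huv
    rw [aug_adj] at huv ⊢
    rcases huv with ⟨h1, h2, h3, h4 | ⟨h4, h5⟩⟩ | h
    · exact Or.inl (Or.inl h4)
    · rw [hx] at h4 h5
      right
      grind
    · exact Or.inl (Or.inr ⟨Finset.mem_insert_of_mem h.1, h.2⟩)

/-- Replacing the edge `pq` of `F` by `wp` and `wq`, that is, subdividing it by `w`, adds at most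
one edge. -/
theorem reroute_card {p q w : V} (hpq : s(p, q) ∈ F) :
    (insert s(w, p) (insert s(w, q) (F.erase s(p, q)))).card ≤ F.card + 1 := by
  have h1 := Finset.card_insert_le s(w, p) (insert s(w, q) (F.erase s(p, q)))
  have h2 := Finset.card_insert_le s(w, q) (F.erase s(p, q))
  have h3 := Finset.card_erase_add_one hpq
  omega

/-- After subdividing the edge `pq` of `F` by a leaf `w` of `T`, all edges are still non-edges of
`T`, provided `p` and `q` differ from the neighbour `a` of `w`. -/
theorem reroute_mem {W' : Finset V} {T' : SimpleGraph V} {p q w a : V}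
    (hw : ∀ v, T.Adj w v ↔ v = a) (hwW : w ∈ W) (hpq : s(p, q) ∈ F)
    (hpw : p ≠ w) (hqw : q ≠ w) (hpa : p ≠ a) (hqa : q ≠ a) (hW' : W' ⊆ W)
    (hTT : ∀ u ∈ W', ∀ v ∈ W', T.Adj u v → T'.Adj u v) (hF : IsAug W' T' F)
    {u v : V} (huv : s(u, v) ∈ insert s(w, p) (insert s(w, q) (F.erase s(p, q)))) :
    u ∈ W ∧ v ∈ W ∧ u ≠ v ∧ ¬ T.Adj u v := by
  have hp := hW' (hF.mem hpq).1
  have hq := hW' (hF.mem hpq).2.1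
  have key : ∀ r, r ∈ W → r ≠ w → r ≠ a → s(u, v) = s(w, r) →
      u ∈ W ∧ v ∈ W ∧ u ≠ v ∧ ¬ T.Adj u v := by
    intro r hr hrw hra h
    rcases Sym2.eq_iff.1 h with ⟨rfl, rfl⟩ | ⟨rfl, rfl⟩
    · exact ⟨hwW, hr, hrw.symm, fun h => hra ((hw _).1 h)⟩
    · exact ⟨hr, hwW, hrw, fun h => hra ((hw _).1 h.symm)⟩
  rcases Finset.mem_insert.1 huv with h | h
  · exact key p hp hpw hpa h
  rcases Finset.mem_insert.1 h with h | h
  · exact key q hq hqw hqa h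
  · obtain ⟨h1, h2, h3, h4⟩ := hF.mem (Finset.mem_of_mem_erase h)
    exact ⟨hW' h1, hW' h2, h3, fun h => h4 (hTT u h1 v h2 h)⟩

/-- Lifts an augmentation from `T` with a leaf `w` at a vertex `a` of degree at least four deleted.
As `a` is not a leaf of the smaller tree, an edge of `F` avoids it, and `w` is placed on that edge.
-/
theorem step_leaf {w a : V} (hT : TreeOn W T) (hW : 5 ≤ W.card)
    (hw : ∀ v, T.Adj w v ↔ v = a) (ha : 4 ≤ degN T a)
    (hF : IsAug (W.erase w) (suppress T w) F) :
    ∃ F' : Finset (Sym2 V), IsAug W T F' ∧ F'.card ≤ F.card + 1 := by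
  have hwa : T.Adj w a := (hw a).2 rfl
  have hwW := hT.supp hwa
  have hd := degN_suppress_leaf hw
  have hc := Finset.card_erase_add_one hwW
  obtain ⟨p, q, hpq, hpa, hqa⟩ :=
    hF.exists_edge (hT.suppress_leaf hw) (by omega) (v := a) (by omega)
  obtain ⟨hp, hq, hpq', -⟩ := hF.mem hpq
  rw [Finset.mem_erase] at hp hq
  refine ⟨_, ⟨reroute_mem hw hwW hpq hp.1 hq.1 hpa hqa (Finset.erase_subset _ _) ?_ hF, ?_⟩,
    reroute_card (w := w) hpq⟩
  · intro u hu v hv h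
    rw [Finset.mem_erase] at hu hv
    exact ⟨h.ne, hu.1, hv.1, Or.inl h⟩
  · refine cut_insert_one (a := p) (b := q) (c := a) hwW hF.cut hW hp.2 hq.2
      (hT.supp hwa.symm) hpq' hpa hqa (aug_adj.2 (Or.inr ⟨by simp, hp.1.symm⟩))
      (aug_adj.2 (Or.inr ⟨by simp, hq.1.symm⟩)) (aug_adj.2 (Or.inl hwa)) ?_
    intro u v huv
    rw [aug_adj] at huv ⊢
    rcases huv with ⟨h1, h2, h3, h4 | ⟨h4, h5⟩⟩ | h
    · exact Or.inl (Or.inl h4)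
    · rw [hw] at h4 h5
      exact absurd (h4.trans h5.symm) h1
    · by_cases h' : s(u, v) = s(p, q)
      · exact Or.inr (Sym2.eq_iff.1 h')
      · exact Or.inl (Or.inr ⟨by simp [h', h.1], h.2⟩)

/-- Lifts an augmentation from `T` with a leaf `w` at a degree-three vertex `x` deleted and `x`
suppressed. The vertex `w` is placed on any edge of `F`; it differs from the tree edge `ab` on which
`x` is placed. -/
theorem step_leaf_three {w x a b : V} (hT : TreeOn W T) (hW : 6 ≤ W.card)
    (hw : ∀ v, T.Adj w v ↔ v = x) (hab : a ≠ b)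
    (hx : ∀ v, (suppress T w).Adj x v ↔ v = a ∨ v = b)
    (hF : IsAug ((W.erase w).erase x) (suppress (suppress T w) x) F) :
    ∃ F' : Finset (Sym2 V), IsAug W T F' ∧ F'.card ≤ F.card + 1 := by
  have hwx : T.Adj w x := (hw x).2 rfl
  have hwW := hT.supp hwx
  have hxW := hT.supp hwx.symm
  have hT1 := hT.suppress_leaf hw
  have hT2 := hT1.suppress_two hab hx
  have hold : ∀ u v, (suppress T w).Adj u v → T.Adj u v := by
    rintro u v ⟨h1, h2, h3, h4 | ⟨h4, h5⟩⟩
    · exact h4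
    · rw [hw] at h4 h5
      exact absurd (h4.trans h5.symm) h1
  have hxa := (hx a).2 (Or.inl rfl)
  have hxb := (hx b).2 (Or.inr rfl)
  have hc := Finset.card_erase_add_one hwW
  have hc' := Finset.card_erase_add_one (hT1.supp hxa)
  obtain ⟨p, q, hpq, -, -⟩ := hF.exists_edge hT2 (by omega) (v := x) (by
    have : degN (suppress (suppress T w) x) x = 0 := by
      unfold degN
      rw [Set.ncard_eq_zero (Set.toFinite _)]
      ext v
      simp [suppress_adj]
    omega)
  obtain ⟨hp, hq, hpq', hpqT⟩ := hF.mem hpq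
  have hnot : ¬ ((p = a ∧ q = b) ∨ (p = b ∧ q = a)) := by
    rintro (⟨rfl, rfl⟩ | ⟨rfl, rfl⟩)
    · exact hpqT ⟨hab, hxa.ne', hxb.ne', Or.inr ⟨hxa, hxb⟩⟩
    · exact hpqT ⟨hab.symm, hxb.ne', hxa.ne', Or.inr ⟨hxb, hxa⟩⟩
  rw [Finset.mem_erase, Finset.mem_erase] at hp hq
  have haW := hT1.supp hxa.symm
  have hbW := hT1.supp hxb.symm
  rw [Finset.mem_erase] at haW hbW
  refine ⟨_, ⟨reroute_mem hw hwW hpq hp.2.1 hq.2.1 hp.1 hq.1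
    ((Finset.erase_subset _ _).trans (Finset.erase_subset _ _)) ?_ hF, ?_⟩,
    reroute_card (w := w) hpq⟩
  · intro u hu v hv h
    rw [Finset.mem_erase, Finset.mem_erase] at hu hv
    exact ⟨h.ne, hu.1, hv.1, Or.inl ⟨h.ne, hu.2.1, hv.2.1, Or.inl h⟩⟩
  · refine cut_insert_two (x := w) (y := x) (a := p) (b := q) (c := a) (d := b) hwW hxW hF.cut hW
      hp.2.2 hq.2.2 haW.2 hbW.2 hpq' hab (fun h => hnot (Or.inl h)) (fun h => hnot (Or.inr h))
      hp.1 hq.1 haW.1 hbW.1 (aug_adj.2 (Or.inl hwx))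
      (aug_adj.2 (Or.inr ⟨by simp, hp.2.1.symm⟩))
      (aug_adj.2 (Or.inr ⟨by simp, hq.2.1.symm⟩)) (aug_adj.2 (Or.inl (hold _ _ hxa)))
      (aug_adj.2 (Or.inl (hold _ _ hxb))) ?_
    intro u v huv
    rw [aug_adj] at huv ⊢
    rcases huv with ⟨h1, h2, h3, h4 | ⟨h4, h5⟩⟩ | h
    · exact Or.inl (Or.inl (hold _ _ h4))
    · rw [hx] at h4 h5
      right; right
      grind
    · by_cases h' : s(u, v) = s(p, q)
      · exact Or.inr (Or.inl (Sym2.eq_iff.1 h'))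
      · exact Or.inl (Or.inr ⟨by simp [h', h.1], h.2⟩)

/-- Suppressing `x` does not change the neighbourhood of a vertex `y` not adjacent to `x`. -/
theorem suppress_nonadj {x y c d : V} (hxy : ¬ T.Adj x y) (hne : x ≠ y)
    (hy : ∀ v, T.Adj y v ↔ v = c ∨ v = d) (v : V) :
    (suppress T x).Adj y v ↔ v = c ∨ v = d := by
  rw [← hy, suppress_adj]
  constructor
  · rintro ⟨h1, h2, h3, h4 | h4⟩
    · exact h4
    · exact absurd h4.1 hxy
  · intro h
    exact ⟨h.ne, hne.symm, by rintro rfl; exact hxy h.symm, Or.inl h⟩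

/-- Lifts an augmentation from `T` with two nonadjacent degree-two vertices `x` and `y` suppressed;
the new edge is `xy`. The two vertices subdivide distinct edges since their neighbourhoods differ.
-/
theorem step_pair {x y a b c d : V} (hT : TreeOn W T) (hW : 6 ≤ W.card) (hab : a ≠ b)
    (hcd : c ≠ d) (hx : ∀ v, T.Adj x v ↔ v = a ∨ v = b) (hy : ∀ v, T.Adj y v ↔ v = c ∨ v = d)
    (hxy : ¬ T.Adj x y) (hne : x ≠ y) (h1 : ¬ (a = c ∧ b = d)) (h2 : ¬ (a = d ∧ b = c))
    (hF : IsAug ((W.erase x).erase y) (suppress (suppress T x) y) F) :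
    ∃ F' : Finset (Sym2 V), IsAug W T F' ∧ F'.card ≤ F.card + 1 := by
  have hxa : T.Adj x a := (hx a).2 (Or.inl rfl)
  have hxb : T.Adj x b := (hx b).2 (Or.inr rfl)
  have hyc : T.Adj y c := (hy c).2 (Or.inl rfl)
  have hyd : T.Adj y d := (hy d).2 (Or.inr rfl)
  have hxW := hT.supp hxa
  have hyW := hT.supp hyc
  have hyx : ¬ T.Adj y x := fun h => hxy h.symm
  refine ⟨insert s(x, y) F, ⟨?_, ?_⟩, Finset.card_insert_le _ _⟩
  · intro u v huv
    rcases Finset.mem_insert.1 huv with h | h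
    · rcases Sym2.eq_iff.1 h with ⟨rfl, rfl⟩ | ⟨rfl, rfl⟩
      · exact ⟨hxW, hyW, hne, hxy⟩
      · exact ⟨hyW, hxW, hne.symm, hyx⟩
    · obtain ⟨h1, h2, h3, h4⟩ := hF.mem h
      rw [Finset.mem_erase, Finset.mem_erase] at h1 h2
      exact ⟨h1.2.2, h2.2.2, h3, fun h => h4 ⟨h3, h1.1, h2.1, Or.inl
        ⟨h3, h1.2.1, h2.2.1, Or.inl h⟩⟩⟩
  · refine cut_insert_two (x := x) (y := y) (a := a) (b := b) (c := c) (d := d) hxW hyW hF.cut hW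
      (hT.supp hxa.symm) (hT.supp hxb.symm) (hT.supp hyc.symm) (hT.supp hyd.symm) hab hcd h1 h2
      (by rintro rfl; exact hxy hxa) (by rintro rfl; exact hxy hxb)
      (by rintro rfl; exact hyx hyc) (by rintro rfl; exact hyx hyd)
      (aug_adj.2 (Or.inr ⟨by simp, hne⟩))
      (aug_adj.2 (Or.inl hxa)) (aug_adj.2 (Or.inl hxb))
      (aug_adj.2 (Or.inl hyc)) (aug_adj.2 (Or.inl hyd)) ?_
    intro u v huv
    rw [aug_adj] at huv ⊢
    rcases huv with ⟨h1, h2, h3, h4 | ⟨h4, h5⟩⟩ | h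
    · obtain ⟨-, -, -, h4 | ⟨h4, h5⟩⟩ := h4
      · exact Or.inl (Or.inl h4)
      · rw [hx] at h4 h5
        right; left
        clear hx hy
        grind
    · rw [suppress_nonadj hxy hne hy] at h4 h5
      right; right
      clear hx hy
      grind
    · exact Or.inl (Or.inr ⟨Finset.mem_insert_of_mem h.1, h.2⟩)

end

variable [Fintype V] [DecidableEq V]

/-! ### Existence of a small augmentation -/

/-- Double counting of incident pairs, a handshake lemma for `F`. -/
theorem sum_incident {W : Finset V} {F : Finset (Sym2 V)}
    (hF : ∀ u v, s(u, v) ∈ F → u ∈ W ∧ v ∈ W ∧ u ≠ v) :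
    ∑ v ∈ W, (F.filter (fun e => v ∈ e)).card = 2 * F.card := by
  have h := Finset.sum_card_bipartiteAbove_eq_sum_card_bipartiteBelow
    (s := W) (t := F) (fun v e => v ∈ e)
  unfold Finset.bipartiteAbove Finset.bipartiteBelow at h
  rw [h, Finset.sum_const_nat (m := 2), mul_comm]
  intro e he
  induction e using Sym2.ind with
  | _ u v =>
    obtain ⟨hu, hv, huv⟩ := hF u v he
    rw [← Finset.card_pair huv]
    congr 1
    ext w
    simp only [Finset.mem_filter, Sym2.mem_iff, Finset.mem_insert, Finset.mem_singleton]
    constructor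
    · exact And.right
    · rintro (rfl | rfl)
      · exact ⟨hu, Or.inl rfl⟩
      · exact ⟨hv, Or.inr rfl⟩

/-- On four vertices, add all non-edges: each vertex then has degree exactly three. -/
theorem exists_aug_four {W : Finset V} {T : SimpleGraph V} (hT : TreeOn W T) (hW : W.card = 4) :
    ∃ F, IsAug W T F ∧ 2 * F.card ≤ defic W T := by
  classical
  let F : Finset (Sym2 V) := Finset.univ.filter
    (fun e => e ∉ T.edgeSet ∧ ¬ e.IsDiag ∧ ∀ v ∈ e, v ∈ W)
  have hF : ∀ u v, s(u, v) ∈ F ↔ u ∈ W ∧ v ∈ W ∧ u ≠ v ∧ ¬ T.Adj u v := by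
    intro u v
    simp only [F, Finset.mem_filter, Finset.mem_univ, true_and, SimpleGraph.mem_edgeSet,
      Sym2.mk_isDiag_iff, Sym2.mem_iff]
    grind
  refine ⟨F, ⟨fun {u v} h => (hF u v).1 h, ?_⟩, ?_⟩
  · rintro S A - ⟨a, ha, haS, haA⟩ ⟨b, hb, hbS, hbA⟩
    have hab : a ≠ b := by rintro rfl; exact hbA haA
    refine ⟨a, ha, b, hb, haS, hbS, haA, hbA, aug_adj.2 ?_⟩
    by_cases h : T.Adj a b
    · exact Or.inl h
    · exact Or.inr ⟨(hF a b).2 ⟨ha, hb, hab, h⟩, hab⟩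
  · rw [← sum_incident (W := W) (fun u v h => by have := (hF u v).1 h; tauto)]
    unfold defic
    apply Finset.sum_le_sum
    intro v hv
    have hsub : F.filter (fun e => v ∈ e) ⊆
        ((W.erase v) \ (T.neighborSet v).toFinset).image (fun w => s(v, w)) := by
      intro e he
      rw [Finset.mem_filter] at he
      obtain ⟨he, w, rfl⟩ := he
      obtain ⟨h1, h2, h3, h4⟩ := (hF v w).1 he
      exact Finset.mem_image.2 ⟨w, by simp [h2, Ne.symm h3, h4], rfl⟩
    have hN : (T.neighborSet v).toFinset ⊆ W.erase v := by
      intro w hw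
      rw [Set.mem_toFinset, SimpleGraph.mem_neighborSet] at hw
      exact Finset.mem_erase.2 ⟨hw.ne', hT.supp hw.symm⟩
    have h1 := (Finset.card_le_card hsub).trans Finset.card_image_le
    rw [Finset.card_sdiff_of_subset hN, Finset.card_erase_of_mem hv, hW,
      ← Set.ncard_eq_toFinset_card'] at h1
    exact h1

/-- The upper bound. The parity slack `+ 1` is used up in the odd case only, whose reduction makes
the deficiency even. -/
theorem exists_aug (n : ℕ) : ∀ {W : Finset V} {T : SimpleGraph V}, W.card = n → 4 ≤ n →
    TreeOn W T → ∃ F, IsAug W T F ∧ 2 * F.card ≤ defic W T + 1 := by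
  induction n using Nat.strong_induction_on with
  | _ n ih =>
  intro W T hWn hn hT
  rcases hn.eq_or_lt with h4 | h5
  · obtain ⟨F, hF, hc⟩ := exists_aug_four hT (by omega)
    exact ⟨F, hF, by omega⟩
  have hpos : ∀ v ∈ W, 1 ≤ degN T v := fun v hv => hT.one_le_degN (by omega) hv
  have hsum := hT.sum
  -- Degrees one and at least three contribute evenly, so an odd deficiency forces a degree two.
  by_cases hodd : defic W T % 2 = 1
  · obtain ⟨x, hxW, hx2⟩ : ∃ x ∈ W, degN T x = 2 := by
      by_contra! hcon
      have : 2 ∣ defic W T := Finset.dvd_sum (fun v hv => by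
        have := hcon v hv
        have := hpos v hv
        omega)
      omega
    obtain ⟨a, b, hab, hx⟩ := degN_eq_two hx2
    have hc := Finset.card_erase_add_one hxW
    have hd := hT.defic_two hab hx
    obtain ⟨F, hF, hFc⟩ := ih (n - 1) (by omega) (by omega) (by omega) (hT.suppress_two hab hx)
    obtain ⟨F', hF', hFc'⟩ := step_two hT (by omega) hab hx hF
    exact ⟨F', hF', by omega⟩
  by_cases hbig : ∃ w a, (∀ v, T.Adj w v ↔ v = a) ∧ 4 ≤ degN T a
  · obtain ⟨w, a, hw, ha⟩ := hbig
    have hc := Finset.card_erase_add_one (hT.supp ((hw a).2 rfl))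
    have hd := hT.defic_leaf hw
    obtain ⟨F, hF, hFc⟩ := ih (n - 1) (by omega) (by omega) (by omega) (hT.suppress_leaf hw)
    obtain ⟨F', hF', hFc'⟩ := step_leaf hT (by omega) hw ha hF
    exact ⟨F', hF', by omega⟩
  -- On five vertices the degree sum is 8. If all degrees were at most three, the deficiency would
  -- be `15 - 8 = 7`, which is odd; so some vertex has degree four and all others are leaves at it.
  have h6 : 6 ≤ n := by
    by_contra h6
    have hn5 : W.card = 5 := by omega
    obtain ⟨v, hv, hv4⟩ : ∃ v ∈ W, 4 ≤ degN T v := by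
      by_contra! hcon
      have : defic W T + ∑ v ∈ W, degN T v = ∑ v ∈ W, 3 := by
        unfold defic
        rw [← Finset.sum_add_distrib]
        exact Finset.sum_congr rfl (fun v hv => by have := hcon v hv; omega)
      rw [Finset.sum_const, smul_eq_mul] at this
      omega
    obtain ⟨w, hw⟩ : (T.neighborSet v).Nonempty :=
      Set.nonempty_of_ncard_ne_zero (by unfold degN at hv4; omega)
    rw [SimpleGraph.mem_neighborSet] at hw
    have hwW : w ∈ W.erase v := Finset.mem_erase.2 ⟨hw.ne', hT.supp hw.symm⟩
    have h1 := Finset.add_sum_erase W (degN T) hv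
    have h2 := Finset.add_sum_erase _ (degN T) hwW
    have h3 := Finset.card_erase_add_one hv
    have h4 := Finset.card_erase_add_one hwW
    have h5 : ((W.erase v).erase w).card • 1 ≤ ∑ u ∈ (W.erase v).erase w, degN T u :=
      Finset.card_nsmul_le_sum _ _ _ (fun u hu => hpos u (by grind))
    rw [smul_eq_mul] at h5
    have h6 := hpos w (hT.supp hw.symm)
    obtain ⟨a, ha⟩ := degN_eq_one (by omega : degN T w = 1)
    obtain rfl := (ha v).1 hw.symm
    exact hbig ⟨w, v, ha, hv4⟩
  by_cases hthree : ∃ w x, (∀ v, T.Adj w v ↔ v = x) ∧ degN T x = 3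
  · obtain ⟨w, x, hw, hx3⟩ := hthree
    have hd1 := hT.defic_leaf hw
    have hT1 := hT.suppress_leaf hw
    have hx2 := degN_suppress_leaf hw
    obtain ⟨a, b, hab, hx⟩ := degN_eq_two (by omega : degN (suppress T w) x = 2)
    have hd2 := hT1.defic_two hab hx
    have hc := Finset.card_erase_add_one (hT.supp ((hw x).2 rfl))
    have hc' := Finset.card_erase_add_one (hT1.supp ((hx a).2 (Or.inl rfl)))
    obtain ⟨F, hF, hFc⟩ := ih (n - 2) (by omega) (by omega) (by omega) (hT1.suppress_two hab hx)
    obtain ⟨F', hF', hFc'⟩ := step_leaf_three hT (by omega) hw hab hx hF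
    exact ⟨F', hF', by omega⟩
  -- No leaf hangs at a vertex of degree at least three any more, nor at another leaf.
  have hleaf : ∀ w x, (∀ v, T.Adj w v ↔ v = x) → ∃ b, w ≠ b ∧ ∀ v, T.Adj x v ↔ v = w ∨ v = b := by
    intro w x hw
    have hwx : T.Adj w x := (hw x).2 rfl
    have h1 : degN T x ≠ 1 := by
      intro h1
      obtain ⟨a, ha⟩ := degN_eq_one h1
      obtain rfl := (ha w).1 hwx.symm
      have := hT.card_le {w, x} (c := w) (by simp) (hT.supp hwx) (by
        intro u hu v huv
        simp only [Finset.mem_insert, Finset.mem_singleton] at hu ⊢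
        rcases hu with rfl | rfl
        · exact Or.inr ((hw v).1 huv)
        · exact Or.inl ((ha v).1 huv))
      have := Finset.card_le_two (a := w) (b := x)
      omega
    have h2 : degN T x ≠ 3 := fun h => hthree ⟨w, x, hw, h⟩
    have h3 : ¬ 4 ≤ degN T x := fun h => hbig ⟨w, x, hw, h⟩
    have h4 := hpos x (hT.supp hwx.symm)
    obtain ⟨a, b, hab, hx⟩ := degN_eq_two (by omega : degN T x = 2)
    rcases (hx w).1 hwx.symm with rfl | rfl
    · exact ⟨b, hab, hx⟩
    · exact ⟨a, hab.symm, fun v => (hx v).trans Or.comm⟩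
  obtain ⟨w₁, hw₁W, hw₁⟩ : ∃ w ∈ W, degN T w < 2 := by
    apply Finset.exists_lt_of_sum_lt
    rw [Finset.sum_const, smul_eq_mul]
    omega
  have hw₁' := hpos w₁ hw₁W
  obtain ⟨w₂, hw₂W, hw₂⟩ : ∃ w ∈ W.erase w₁, degN T w < 2 := by
    apply Finset.exists_lt_of_sum_lt
    have := Finset.add_sum_erase W (degN T) hw₁W
    have := Finset.card_erase_add_one hw₁W
    rw [Finset.sum_const, smul_eq_mul]
    omega
  rw [Finset.mem_erase] at hw₂W
  have hw₂' := hpos w₂ hw₂W.2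
  obtain ⟨x, hwx⟩ := degN_eq_one (by omega : degN T w₁ = 1)
  obtain ⟨y, hwy⟩ := degN_eq_one (by omega : degN T w₂ = 1)
  obtain ⟨b, hwb, hx⟩ := hleaf w₁ x hwx
  obtain ⟨d, hwd, hy⟩ := hleaf w₂ y hwy
  -- If two leaves shared their neighbour, the tree would be a path on three vertices.
  have hxy : x ≠ y := by
    rintro rfl
    have hb : b = w₂ := by
      have := (hx w₂).1 ((hy w₂).2 (Or.inl rfl))
      have := hw₂W.1
      tauto
    subst hb
    have := hT.card_le {w₁, x, b} (c := w₁) (by simp) hw₁W (by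
      intro u hu v huv
      simp only [Finset.mem_insert, Finset.mem_singleton] at hu ⊢
      rcases hu with rfl | rfl | rfl
      · exact Or.inr (Or.inl ((hwx v).1 huv))
      · have := (hx v).1 huv; tauto
      · exact Or.inr (Or.inl ((hwy v).1 huv)))
    have := Finset.card_le_three (a := w₁) (b := x) (c := b)
    omega
  -- If `x` and `y` were adjacent, the tree would be a path on four vertices.
  have hnadj : ¬ T.Adj x y := by
    intro h
    have hw₁y : y ≠ w₁ := by
      rintro rfl
      have := (hwx w₂).1 ((hy w₂).2 (Or.inl rfl))
      have := (hwx d).1 ((hy d).2 (Or.inr rfl))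
      grind
    have hw₂x : x ≠ w₂ := by
      rintro rfl
      have := (hwy w₁).1 ((hx w₁).2 (Or.inl rfl))
      have := (hwy b).1 ((hx b).2 (Or.inr rfl))
      grind
    have hb : y = b := ((hx y).1 h).resolve_left hw₁y
    have hd : x = d := ((hy x).1 h.symm).resolve_left hw₂x
    subst hb; subst hd
    have := hT.card_le {w₁, x, y, w₂} (c := w₁) (by simp) hw₁W (by
      intro u hu v huv
      simp only [Finset.mem_insert, Finset.mem_singleton] at hu ⊢
      rcases hu with rfl | rfl | rfl | rfl
      · have := (hwx v).1 huv; tauto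
      · have := (hx v).1 huv; tauto
      · have := (hy v).1 huv; tauto
      · have := (hwy v).1 huv; tauto)
    have := Finset.card_le_four (a := w₁) (b := x) (c := y) (d := w₂)
    omega
  have hw₁d : w₁ ≠ d := by
    rintro rfl
    exact hxy ((hwx y).1 ((hy w₁).2 (Or.inr rfl)).symm).symm
  have hT1 := hT.suppress_two hwb hx
  have hy' := suppress_nonadj hnadj hxy hy
  have hT2 := hT1.suppress_two hwd hy'
  have hd1 := hT.defic_two hwb hx
  have hd2 := hT1.defic_two hwd hy'
  have hc := Finset.card_erase_add_one (hT.supp ((hx b).2 (Or.inr rfl)))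
  have hc' := Finset.card_erase_add_one (hT1.supp ((hy' d).2 (Or.inr rfl)))
  obtain ⟨F, hF, hFc⟩ := ih (n - 2) (by omega) (by omega) (by omega) hT2
  obtain ⟨F', hF', hFc'⟩ := step_pair hT (by omega) hwb hwd hx hy hnadj hxy
    (fun h => hw₂W.1 h.1.symm) (fun h => hw₁d h.1) hF
  exact ⟨F', hF', by omega⟩

/-! ### The lower bound and the translation to cuts -/

theorem threeConnected_iff_cut {G : SimpleGraph V} (hn : 4 ≤ Fintype.card V) :
    ThreeConnected G ↔ Cut 2 Finset.univ G := by
  constructor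
  · rintro h S A hS ⟨a, -, haS, haA⟩ ⟨b, -, hbS, hbA⟩
    obtain ⟨p⟩ := (h S hS).preconnected ⟨a, by simpa using haS⟩ ⟨b, by simpa using hbS⟩
    obtain ⟨d, -, hd1, hd2⟩ := p.exists_boundary_dart (Subtype.val ⁻¹' A) haA hbA
    have h1 := d.fst.2
    have h2 := d.snd.2
    simp only [Set.mem_compl_iff, Finset.mem_coe] at h1 h2
    exact ⟨d.fst, by simp, d.snd, by simp, h1, h2, hd1, hd2, d.adj⟩
  · intro h S hS
    obtain ⟨z, -, hz⟩ : ∃ z ∈ (Finset.univ : Finset V), z ∉ S :=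
      Finset.exists_mem_notMem_of_card_lt_card (by rw [Finset.card_univ]; omega)
    have : Nonempty ((S : Set V)ᶜ : Set V) := ⟨⟨z, by simpa using hz⟩⟩
    refine ⟨?_⟩
    rintro ⟨a, ha⟩ ⟨b, hb⟩
    by_contra hab
    obtain ⟨u, -, v, -, huS, hvS, ⟨huS', hu⟩, hv, huv⟩ := h S
      {z | ∃ hz : z ∈ (S : Set V)ᶜ, (G.induce ((S : Set V)ᶜ)).Reachable ⟨a, ha⟩ ⟨z, hz⟩} hS
      ⟨a, by simp, by simpa using ha, ha, SimpleGraph.Reachable.refl _⟩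
      ⟨b, by simp, by simpa using hb, fun ⟨_, h⟩ => hab h⟩
    have hvS' : v ∈ (S : Set V)ᶜ := by simpa using hvS
    refine hv ⟨hvS', hu.trans (SimpleGraph.Adj.reachable ?_)⟩
    exact huv

theorem treeOn_univ {T : SimpleGraph V} (hT : T.IsTree) : TreeOn Finset.univ T where
  supp _ := Finset.mem_univ _
  conn := by
    rintro A ⟨a, -, ha⟩ ⟨b, -, hb⟩
    obtain ⟨p⟩ := hT.connected.preconnected a b
    obtain ⟨d, -, hd1, hd2⟩ := p.exists_boundary_dart A ha hb
    exact ⟨d.fst, d.snd, d.adj, hd1, hd2⟩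
  bridge := by
    intro u v huv
    have hb := SimpleGraph.isAcyclic_iff_forall_adj_isBridge.1 hT.isAcyclic huv
    rw [SimpleGraph.isBridge_iff] at hb
    refine ⟨{z | (T \ SimpleGraph.fromEdgeSet {s(u, v)}).Reachable u z},
      SimpleGraph.Reachable.refl _, hb, ?_⟩
    intro p q hpq hp hq
    have h : s(p, q) = s(u, v) := by
      by_contra hne
      refine hq (SimpleGraph.Reachable.trans hp (SimpleGraph.Adj.reachable ?_))
      rw [SimpleGraph.sdiff_adj, SimpleGraph.fromEdgeSet_adj]
      exact ⟨hpq, fun h => hne h.1⟩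
    rcases Sym2.eq_iff.1 h with h | ⟨rfl, rfl⟩
    · exact h
    · exact absurd hp hb
  sum := by
    classical
    have h1 := T.sum_degrees_eq_twice_card_edges
    have h2 := hT.card_edgeFinset
    have h3 : ∀ v, degN T v = T.degree v := fun v => by
      rw [degN, Set.ncard_eq_toFinset_card', ← SimpleGraph.card_neighborFinset_eq_degree]
      rfl
    simp only [h3]
    rw [h1, Finset.card_univ]
    omega

theorem defic_univ {T : SimpleGraph V} (hpos : ∀ v, 1 ≤ degN T v) :
    defic Finset.univ T = 2 * (Finset.univ.filter (fun v => degN T v = 1)).card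
      + (Finset.univ.filter (fun v => degN T v = 2)).card := by
  rw [Finset.card_filter, Finset.card_filter, Finset.mul_sum, ← Finset.sum_add_distrib]
  refine Finset.sum_congr rfl (fun v _ => ?_)
  have := hpos v
  split_ifs <;> omega

/-- The lower bound: each vertex `v` lies on at least `3 - deg v` edges of `F`. -/
theorem defic_le {T : SimpleGraph V} {F : Finset (Sym2 V)} (hn : 4 ≤ Fintype.card V)
    (hF : ∀ e ∈ F, ¬ e.IsDiag)
    (hcut : Cut 2 Finset.univ (T ⊔ SimpleGraph.fromEdgeSet (F : Set (Sym2 V)))) :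
    defic Finset.univ T ≤ 2 * F.card := by
  classical
  rw [← sum_incident (W := Finset.univ) (F := F)
    (fun u v h => ⟨by simp, by simp, fun huv => hF _ h (by simpa using huv)⟩)]
  unfold defic
  refine Finset.sum_le_sum (fun v _ => ?_)
  have h1 : (Finset.univ.filter (fun w => s(v, w) ∈ F)).card ≤
      (F.filter (fun e => v ∈ e)).card := by
    refine Finset.card_le_card_of_injOn (fun w => s(v, w)) ?_ ?_
    · intro w hw
      simpa using hw
    · intro w _ w' _ h
      exact Sym2.congr_right.1 h
  by_contra hlt
  have h2 := Finset.card_union_le (T.neighborSet v).toFinset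
    (Finset.univ.filter (fun w => s(v, w) ∈ F))
  rw [← Set.ncard_eq_toFinset_card'] at h2
  change _ ≤ degN T v + _ at h2
  obtain ⟨w, -, hw, hvw⟩ := hcut.exists_nbr (by rwa [Finset.card_univ]) (Finset.mem_univ v)
    (S := (T.neighborSet v).toFinset ∪ Finset.univ.filter (fun w => s(v, w) ∈ F)) (by omega) (by
      simp only [Finset.mem_union, Set.mem_toFinset, SimpleGraph.mem_neighborSet,
        SimpleGraph.irrefl, Finset.mem_filter, Finset.mem_univ, true_and, false_or]
      exact fun h => hF _ h (by simp))
  rw [aug_adj] at hvw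
  simp only [Finset.mem_union, Set.mem_toFinset, SimpleGraph.mem_neighborSet,
        Finset.mem_filter, Finset.mem_univ, true_and] at hw
  tauto

end TreeAug

/-- For a tree `T` on `n ≥ 4` vertices, the minimum size of an augmenting set of
non-edges making the graph 3-vertex-connected is exactly `⌈(2·l₁ + l₂)/2⌉`. -/
theorem tree_triconnectivity_augmentation_optimal
    {V : Type*} [Fintype V] (T : SimpleGraph V) (hT : T.IsTree)
    (hn : 4 ≤ Fintype.card V) :
    IsLeast {k : ℕ | ∃ F : Finset (Sym2 V),
        (∀ e ∈ F, ¬ e.IsDiag ∧ e ∉ T.edgeSet) ∧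
        ThreeConnected (T ⊔ SimpleGraph.fromEdgeSet (F : Set (Sym2 V))) ∧
        F.card = k}
      ((2 * (Finset.univ.filter (fun v => degN T v = 1)).card
          + (Finset.univ.filter (fun v => degN T v = 2)).card + 1) / 2) := by
  classical
  have hT' := TreeAug.treeOn_univ hT
  rw [← TreeAug.defic_univ (fun v => hT'.one_le_degN (by rw [Finset.card_univ]; omega)
    (Finset.mem_univ v))]
  have hlow : ∀ F : Finset (Sym2 V), (∀ e ∈ F, ¬ e.IsDiag ∧ e ∉ T.edgeSet) →
      ThreeConnected (T ⊔ SimpleGraph.fromEdgeSet (F : Set (Sym2 V))) →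
      TreeAug.defic Finset.univ T ≤ 2 * F.card := fun F h1 h2 =>
    TreeAug.defic_le hn (fun e he => (h1 e he).1) ((TreeAug.threeConnected_iff_cut hn).1 h2)
  constructor
  · obtain ⟨F, hF, hc⟩ := TreeAug.exists_aug _ Finset.card_univ hn hT'
    have h1 : ∀ e ∈ F, ¬ e.IsDiag ∧ e ∉ T.edgeSet := by
      intro e he
      induction e using Sym2.ind with
      | _ u v =>
        obtain ⟨-, -, h1, h2⟩ := hF.mem he
        exact ⟨by simpa using h1, by simpa using h2⟩
    have h2 := (TreeAug.threeConnected_iff_cut hn).2 hF.cut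
    have h3 := hlow F h1 h2
    exact ⟨F, h1, h2, by omega⟩
  · rintro k ⟨F, h1, h2, rfl⟩
    have h3 := hlow F h1 h2
    omega
end

section
/- Let n ≥ 4 be an even natural number, and let H be the simple graph on the vertex set ZMod n in which distinct vertices u and v are adjacent if and only if u − v ∈ {1, −1, n/2} (i.e., H is the n-cycle together with all antipodal chords {i, i + n/2}). Then H is 3-vertex-connected. -/
/-- The case where the removed set lies in `{a, a + d}`, with `d` at most half of `n`. -/
theorem connected_of_arc
    (n : ℕ) [NeZero n] (hn : 4 ≤ n) (heven : Even n)
    (H : SimpleGraph (ZMod n))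
    (hH : ∀ u v : ZMod n, H.Adj u v ↔
      u ≠ v ∧ u - v ∈ ({1, -1, ((n / 2 : ℕ) : ZMod n)} : Set (ZMod n)))
    (S : Finset (ZMod n)) (a : ZMod n) (d : ℕ) (hd : 0 < d) (hdm : d ≤ n / 2)
    (hS : ∀ x ∈ S, x = a ∨ x = a + (d : ZMod n)) :
    (H.induce ((S : Set (ZMod n))ᶜ)).Connected := by
  obtain ⟨m, hm⟩ := heven
  have hm2 : n / 2 = m := by omega
  rw [hm2] at hH hdm
  have cast_inj : ∀ i j : ℕ, i < n → j < n → a + (i : ZMod n) = a + (j : ZMod n) → i = j := by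
    intro i j hi hj h
    have h' := add_left_cancel h
    rw [ZMod.natCast_eq_natCast_iff'] at h'
    rwa [Nat.mod_eq_of_lt hi, Nat.mod_eq_of_lt hj] at h'
  have notMem : ∀ k : ℕ, k < n → k ≠ 0 → k ≠ d → a + (k : ZMod n) ∈ ((S : Set (ZMod n))ᶜ) := by
    intro k hk h0 hkd hmem
    rcases hS _ hmem with h | h
    · exact h0 (cast_inj k 0 hk (by omega) (by simpa using h))
    · exact hkd (cast_inj k d hk (by omega) h)
  have cast_n : (n : ZMod n) = 0 := ZMod.natCast_self n
  have adj_succ : ∀ k : ℕ, k + 1 < n →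
      H.Adj (a + (k : ZMod n)) (a + ((k + 1 : ℕ) : ZMod n)) := by
    intro k hk
    refine (hH _ _).2 ⟨fun h => ?_, Or.inr (Or.inl ?_)⟩
    · have := cast_inj _ _ (by omega) hk h
      omega
    · push_cast; ring
  have adj_chord : ∀ k : ℕ, k + m < n →
      H.Adj (a + (k : ZMod n)) (a + ((k + m : ℕ) : ZMod n)) := by
    intro k hk
    refine (hH _ _).2 ⟨fun h => ?_, Or.inr (Or.inr ?_)⟩
    · have := cast_inj _ _ (by omega) hk h
      omega
    · have h2 : (m : ZMod n) + m = 0 := by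
        rw [← Nat.cast_add, ← hm, cast_n]
      push_cast
      simp only [Set.mem_singleton_iff]
      linear_combination -h2
  have adj_last : H.Adj (a + ((0 : ℕ) : ZMod n)) (a + ((n - 1 : ℕ) : ZMod n)) := by
    refine (hH _ _).2 ⟨fun h => ?_, Or.inl ?_⟩
    · have := cast_inj _ _ (by omega) (by omega) h
      omega
    · rw [Nat.cast_sub (by omega), cast_n]; push_cast; ring
  have ht := notMem (n - 1) (by omega) (by omega) (by omega)
  have step : ∀ x y : ZMod n, H.Adj x y → ∀ hy : y ∈ ((S : Set (ZMod n))ᶜ),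
      (H.induce ((S : Set (ZMod n))ᶜ)).Reachable ⟨y, hy⟩ ⟨_, ht⟩ →
      ∀ hx : x ∈ ((S : Set (ZMod n))ᶜ),
      (H.induce ((S : Set (ZMod n))ᶜ)).Reachable ⟨x, hx⟩ ⟨_, ht⟩ := by
    intro x y hxy hy hr hx
    refine SimpleGraph.Reachable.trans (SimpleGraph.Adj.reachable ?_) hr
    simpa using hxy
  have long : ∀ j k : ℕ, k + j + 1 = n → d < k → ∀ hx : a + (k : ZMod n) ∈ ((S : Set (ZMod n))ᶜ),
      (H.induce ((S : Set (ZMod n))ᶜ)).Reachable ⟨_, hx⟩ ⟨_, ht⟩ := by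
    intro j
    induction j with
    | zero =>
      intro k hk _ hx
      obtain rfl : k = n - 1 := by omega
      exact SimpleGraph.Reachable.refl _
    | succ j ih =>
      intro k hk hdk hx
      exact step _ _ (adj_succ k (by omega)) (notMem (k + 1) (by omega) (by omega) (by omega))
        (ih (k + 1) (by omega) (by omega) _) hx
  have all : ∀ k : ℕ, k < n → ∀ hx : a + (k : ZMod n) ∈ ((S : Set (ZMod n))ᶜ),
      (H.induce ((S : Set (ZMod n))ᶜ)).Reachable ⟨_, hx⟩ ⟨_, ht⟩ := by
    intro k hk hx
    rcases Nat.eq_zero_or_pos k with rfl | hk0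
    · exact step _ _ adj_last ht (SimpleGraph.Reachable.refl _) hx
    rcases lt_trichotomy k d with h | rfl | h
    · exact step _ _ (adj_chord k (by omega)) (notMem (k + m) (by omega) (by omega) (by omega))
        (long (n - 1 - (k + m)) (k + m) (by omega) (by omega) _) hx
    · exact step _ _ (adj_succ k (by omega)) (notMem (k + 1) (by omega) (by omega) (by omega))
        (long (n - 1 - (k + 1)) (k + 1) (by omega) (by omega) _) hx
    · exact long (n - 1 - k) k (by omega) h hx
  have all' : ∀ x : ((S : Set (ZMod n))ᶜ : Set (ZMod n)),
      (H.induce ((S : Set (ZMod n))ᶜ)).Reachable x ⟨_, ht⟩ := by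
    rintro ⟨x, hx⟩
    obtain ⟨k, hk, rfl⟩ : ∃ k : ℕ, k < n ∧ x = a + (k : ZMod n) :=
      ⟨(x - a).val, ZMod.val_lt _, by simp⟩
    exact all k hk hx
  exact (SimpleGraph.connected_iff _).2 ⟨fun x y => (all' x).trans (all' y).symm, ⟨⟨_, ht⟩⟩⟩

/-- For even `n ≥ 4`, the circulant graph on `ZMod n` in which distinct `u, v` are
adjacent iff `u - v ∈ {1, -1, n/2}` (the `n`-cycle plus all antipodal chords) is
3-vertex-connected. -/
theorem cycle_with_antipodal_chords_three_connected
    (n : ℕ) [NeZero n] (hn : 4 ≤ n) (heven : Even n)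
    (H : SimpleGraph (ZMod n))
    (hH : ∀ u v : ZMod n, H.Adj u v ↔
      u ≠ v ∧ u - v ∈ ({1, -1, ((n / 2 : ℕ) : ZMod n)} : Set (ZMod n))) :
    ThreeConnected H := by
  intro S hS
  obtain ⟨T, hST, hT⟩ := Finset.exists_superset_card_eq hS (by rw [ZMod.card]; omega)
  obtain ⟨a, b, hab, rfl⟩ := Finset.card_eq_two.1 hT
  have hS' : ∀ x ∈ S, x = a ∨ x = b := fun x hx => by simpa using hST hx
  have hne : b - a ≠ 0 := sub_ne_zero.2 hab.symm
  have hpos : 0 < (b - a).val := Nat.pos_of_ne_zero fun h => hne ((ZMod.val_eq_zero _).1 h)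
  have hlt := ZMod.val_lt (b - a)
  by_cases h : (b - a).val ≤ n / 2
  · exact connected_of_arc n hn heven H hH S a _ hpos h (by simpa using hS')
  · refine connected_of_arc n hn heven H hH S b (n - (b - a).val) (by omega) (by omega) ?_
    have hcast : b + ((n - (b - a).val : ℕ) : ZMod n) = a := by
      rw [Nat.cast_sub hlt.le]; simp
    rw [hcast]
    exact fun x hx => (hS' x hx).symm
end

section
/- Let n ≥ 5 be an odd natural number, and let H be the simple graph on the vertex set ZMod n whose edges are: the cycle edges {i, i+1} for all i ∈ ZMod n; the chords {i, i + ⌊n/2⌋} for i ∈ {1, 2, …, ⌊n/2⌋}; and the additional chord {0, ⌊n/2⌋ + 1} (writing vertex 0 for v_n). Then H is 3-vertex-connected and every vertex of H has degree at least 3. -/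
/-- A predicate invariant under the steps `x ~ x + 1` that avoid `a` and `b` is constant on every
interval avoiding `a` and `b`. -/
lemma oddAug_interval (m a b : ℕ) (c : ℕ → Prop)
    (h1 : ∀ x, x + 1 ≤ 2 * m → x ≠ a → x ≠ b → x + 1 ≠ a → x + 1 ≠ b → (c x ↔ c (x + 1)))
    (p q : ℕ) (hpq : p ≤ q) (hq : q ≤ 2 * m)
    (hav : ∀ x, p ≤ x → x ≤ q → x ≠ a ∧ x ≠ b) : c p ↔ c q := by
  induction q, hpq using Nat.le_induction with
  | base => rfl
  | succ q hpq ih =>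
    have hx := hav q hpq (by omega)
    have hy := hav (q + 1) (by omega) le_rfl
    exact (ih (by omega) fun x hx hxq => hav x hx (by omega)).trans
      (h1 q hq hx.1 hx.2 hy.1 hy.2)

/-- A predicate on `0, …, 2m` invariant along every edge avoiding `a ≤ b` is constant on the
vertices other than `a` and `b`. A single deleted vertex is the case `a = b`, and no deletion is
encoded by the out-of-range value `a = b = 2m + 1`. -/
lemma oddAug_const (m a b : ℕ) (hm : 2 ≤ m) (c : ℕ → Prop) (hab : a ≤ b)
    (hb : b ≤ 2 * m ∨ (a = 2 * m + 1 ∧ b = 2 * m + 1))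
    (h1 : ∀ x, x + 1 ≤ 2 * m → x ≠ a → x ≠ b → x + 1 ≠ a → x + 1 ≠ b → (c x ↔ c (x + 1)))
    (h2 : 0 ≠ a → 0 ≠ b → 2 * m ≠ a → 2 * m ≠ b → (c 0 ↔ c (2 * m)))
    (h3 : ∀ x, 1 ≤ x → x ≤ m → x ≠ a → x ≠ b → x + m ≠ a → x + m ≠ b → (c x ↔ c (x + m)))
    (h4 : 0 ≠ a → 0 ≠ b → m + 1 ≠ a → m + 1 ≠ b → (c 0 ↔ c (m + 1)))
    (x y : ℕ) (hx : x ≤ 2 * m) (hy : y ≤ 2 * m) (hxa : x ≠ a) (hxb : x ≠ b)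
    (hya : y ≠ a) (hyb : y ≠ b) : c x ↔ c y := by
  have hint := oddAug_interval m a b c h1
  have inner : ∀ p q, a < p → p ≤ q → q < b → (c p ↔ c q) := fun p q h h' h'' =>
    hint p q h' (by omega) fun z _ _ => by omega
  have low : ∀ q, q < a → q ≤ 2 * m → (c 0 ↔ c q) := fun q h h' =>
    hint 0 q (by omega) h' fun z _ _ => by omega
  have high : ∀ q, b < q → q ≤ 2 * m → (c q ↔ c (2 * m)) := fun q h h' =>
    hint q (2 * m) h' le_rfl fun z _ _ => by omega
  -- The two pieces of the outer arc are joined by the closing edge `{2m, 0}`.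
  have lowhigh : ∀ p q, p < a → p ≤ 2 * m → b < q → q ≤ 2 * m → (c p ↔ c q) :=
    fun p q h h' h'' h3 => (low p h h').symm.trans
      ((h2 (by omega) (by omega) (by omega) (by omega)).trans (high q h'' h3).symm)
  have outer : ∀ p q, (p < a ∨ b < p) → (q < a ∨ b < q) → p ≤ 2 * m → q ≤ 2 * m →
      (c p ↔ c q) := by
    intro p q hp hq hp' hq'
    rcases hp with hp | hp <;> rcases hq with hq | hq
    · exact (low p hp hp').symm.trans (low q hq hq')
    · exact lowhigh p q hp hp' hq hq'
    · exact (lowhigh q p hq hq' hp hp').symm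
    · exact (high p hp hp').trans (high q hq hq').symm
  have inner' : ∀ p q, a < p → p < b → a < q → q < b → (c p ↔ c q) := by
    intro p q hp hp' hq hq'
    rcases le_total p q with h | h
    · exact inner p q hp h hq'
    · exact (inner q p hq h hp').symm
  have cross : ∀ p q, a < p → p < b → (q < a ∨ b < q) → q ≤ 2 * m → (c p ↔ c q) := by
    intro p q hp hp' hq hq'
    have key : ∃ s t, a < s ∧ s < b ∧ (t < a ∨ b < t) ∧ t ≤ 2 * m ∧ (c s ↔ c t) := by
      rcases Nat.eq_zero_or_pos a with ha | ha
      · by_cases hbm : b ≤ m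
        · refine ⟨1, 1 + m, by omega, by omega, by omega, by omega, ?_⟩
          exact h3 1 le_rfl (by omega) (by omega) (by omega) (by omega) (by omega)
        · refine ⟨m, m + m, by omega, by omega, by omega, by omega, ?_⟩
          exact h3 m (by omega) (by omega) (by omega) (by omega) (by omega) (by omega)
      · by_cases ham : m + 1 ≤ a
        · refine ⟨a + 1, a + 1 - m, by omega, by omega, by omega, by omega, ?_⟩
          have h := h3 (a + 1 - m) (by omega) (by omega) (by omega) (by omega)
            (by omega) (by omega)
          rw [show a + 1 - m + m = a + 1 by omega] at h
          exact h.symm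
        · by_cases hbm : b ≤ m + 1
          · refine ⟨a + 1, a + 1 + m, by omega, by omega, by omega, by omega, ?_⟩
            exact h3 (a + 1) (by omega) (by omega) (by omega) (by omega) (by omega) (by omega)
          · refine ⟨m + 1, 0, by omega, by omega, by omega, by omega, ?_⟩
            exact (h4 (by omega) (by omega) (by omega) (by omega)).symm
    obtain ⟨s, t, hs, hs', ht, ht', hst⟩ := key
    exact (inner' p s hp hp' hs hs').trans (hst.trans (outer t q ht hq ht' hq'))
  by_cases hxi : a < x ∧ x < b <;> by_cases hyi : a < y ∧ y < b
  · exact inner' x y hxi.1 hxi.2 hyi.1 hyi.2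
  · exact cross x y hxi.1 hxi.2 (by omega) hy
  · exact (cross y x hyi.1 hyi.2 (by omega) hx).symm
  · exact outer x y (by omega) (by omega) hx hy

lemma natCast_zmod_inj (m x y : ℕ) (hx : x ≤ 2 * m) (hy : y ≤ 2 * m)
    (h : (x : ZMod (2 * m + 1)) = y) : x = y := by
  rw [ZMod.natCast_eq_natCast_iff', Nat.mod_eq_of_lt (by omega), Nat.mod_eq_of_lt (by omega)] at h
  exact h

/-- A set of at most two vertices is described by two numbers `a ≤ b`, with the same encoding of
small sets as in `oddAug_const`. -/
lemma exists_deleted_pair (m : ℕ) (S : Finset (ZMod (2 * m + 1))) (hS : S.card ≤ 2) :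
    ∃ a b : ℕ, a ≤ b ∧ (b ≤ 2 * m ∨ (a = 2 * m + 1 ∧ b = 2 * m + 1)) ∧
      ∀ x : ℕ, x ≤ 2 * m → ((x : ZMod (2 * m + 1)) ∈ S ↔ x = a ∨ x = b) := by
  have hval : ∀ (u : ZMod (2 * m + 1)) (x : ℕ), x ≤ 2 * m →
      ((x : ZMod (2 * m + 1)) = u ↔ x = u.val) := by
    intro u x hx
    constructor
    · rintro rfl
      rw [ZMod.val_natCast, Nat.mod_eq_of_lt (by omega)]
    · rintro rfl
      exact ZMod.natCast_zmod_val u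
  have hlt : ∀ u : ZMod (2 * m + 1), u.val ≤ 2 * m := fun u => Nat.lt_succ_iff.mp (ZMod.val_lt u)
  have pair : ∀ u v : ZMod (2 * m + 1), S = {u, v} → ∃ a b : ℕ, a ≤ b ∧
      (b ≤ 2 * m ∨ (a = 2 * m + 1 ∧ b = 2 * m + 1)) ∧
      ∀ x : ℕ, x ≤ 2 * m → ((x : ZMod (2 * m + 1)) ∈ S ↔ x = a ∨ x = b) := by
    rintro u v rfl
    rcases le_total u.val v.val with h | h
    · refine ⟨u.val, v.val, h, .inl (hlt v), fun x hx => ?_⟩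
      rw [Finset.mem_insert, Finset.mem_singleton, hval u x hx, hval v x hx]
    · refine ⟨v.val, u.val, h, .inl (hlt u), fun x hx => ?_⟩
      rw [Finset.mem_insert, Finset.mem_singleton, hval u x hx, hval v x hx, or_comm]
  obtain h | h | h : S.card = 0 ∨ S.card = 1 ∨ S.card = 2 := by omega
  · rw [Finset.card_eq_zero] at h
    subst h
    refine ⟨2 * m + 1, 2 * m + 1, le_rfl, .inr ⟨rfl, rfl⟩, fun x hx => ?_⟩
    simp only [Finset.notMem_empty, false_iff]
    omega
  · obtain ⟨u, hu⟩ := Finset.card_eq_one.mp h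
    exact pair u u (by simpa using hu)
  · obtain ⟨u, v, -, huv⟩ := Finset.card_eq_two.mp h
    exact pair u v huv

lemma three_le_degN {V : Type*} [Finite V] (G : SimpleGraph V) (v x y z : V)
    (hx : G.Adj v x) (hy : G.Adj v y) (hz : G.Adj v z) (hxy : x ≠ y) (hxz : x ≠ z)
    (hyz : y ≠ z) : 3 ≤ degN G v := by
  have h3 : ({x, y, z} : Set V).ncard = 3 := Set.ncard_eq_three.mpr ⟨x, y, z, hxy, hxz, hyz, rfl⟩
  rw [← h3]
  refine Set.ncard_le_ncard ?_ (Set.toFinite _)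
  rintro w (rfl | rfl | rfl) <;> assumption

/-- For odd `n ≥ 5`, the graph on `ZMod n` consisting of the `n`-cycle edges
`{i, i+1}`, the chords `{i, i + ⌊n/2⌋}` for `1 ≤ i ≤ ⌊n/2⌋`, and the extra chord
`{0, ⌊n/2⌋ + 1}` is 3-vertex-connected and has minimum degree at least 3. -/
theorem odd_path_augmentation_graph_three_connected
    (n : ℕ) [NeZero n] (hn : 5 ≤ n) (hodd : Odd n)
    (H : SimpleGraph (ZMod n))
    (hH : ∀ u v : ZMod n, H.Adj u v ↔ u ≠ v ∧
      (s(u, v) ∈ ({e | ∃ i : ZMod n, e = s(i, i + 1)} ∪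
        {e | ∃ i : ℕ, 1 ≤ i ∧ i ≤ n / 2 ∧
          e = s((i : ZMod n), (i : ZMod n) + ((n / 2 : ℕ) : ZMod n))} ∪
        {s((0 : ZMod n), ((n / 2 : ℕ) : ZMod n) + 1)} : Set (Sym2 (ZMod n))))) :
    ThreeConnected H ∧ ∀ v : ZMod n, 3 ≤ degN H v := by
  obtain ⟨m, rfl⟩ := hodd
  have hm : 2 ≤ m := by omega
  have hdiv : (2 * m + 1) / 2 = m := by omega
  rw [hdiv] at hH
  have hinj := natCast_zmod_inj m
  have e1 : ∀ x : ℕ, x + 1 ≤ 2 * m → H.Adj (x : ZMod (2 * m + 1)) ((x + 1 : ℕ) : ZMod _) := by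
    intro x hx
    refine (hH _ _).mpr ⟨fun h => ?_, .inl (.inl ⟨x, by push_cast; rfl⟩)⟩
    have := hinj _ _ (by omega) hx h
    omega
  have e2 : H.Adj ((0 : ℕ) : ZMod (2 * m + 1)) ((2 * m : ℕ) : ZMod _) := by
    refine (hH _ _).mpr ⟨fun h => ?_, .inl (.inl ⟨((2 * m : ℕ) : ZMod _), ?_⟩)⟩
    · have := hinj _ _ (by omega) (by omega) h
      omega
    · have h0 : ((2 * m : ℕ) : ZMod (2 * m + 1)) + 1 = 0 := by
        exact_mod_cast ZMod.natCast_self (2 * m + 1)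
      rw [h0, Sym2.eq_swap, Nat.cast_zero]
  have e3 : ∀ x : ℕ, 1 ≤ x → x ≤ m →
      H.Adj (x : ZMod (2 * m + 1)) ((x + m : ℕ) : ZMod _) := by
    intro x hx hxm
    refine (hH _ _).mpr ⟨fun h => ?_, .inl (.inr ⟨x, hx, hxm, by push_cast; rfl⟩)⟩
    have := hinj _ _ (by omega) (by omega) h
    omega
  have e4 : H.Adj ((0 : ℕ) : ZMod (2 * m + 1)) ((m + 1 : ℕ) : ZMod _) := by
    refine (hH _ _).mpr ⟨fun h => ?_, .inr ?_⟩
    · have := hinj _ _ (by omega) (by omega) h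
      omega
    · rw [Set.mem_singleton_iff]
      push_cast
      rfl
  have hcast : ∀ v : ZMod (2 * m + 1), ∃ k : ℕ, k ≤ 2 * m ∧ (k : ZMod (2 * m + 1)) = v :=
    fun v => ⟨v.val, Nat.lt_succ_iff.mp (ZMod.val_lt v), ZMod.natCast_zmod_val v⟩
  refine ⟨fun S hS => ?_, fun v => ?_⟩
  · obtain ⟨a, b, hab, hb, hmem⟩ := exists_deleted_pair m S hS
    obtain ⟨r, hr⟩ : ∃ r, r ∉ S := by
      by_contra! hall
      have h := Finset.card_le_card (fun x _ => hall x : Finset.univ ⊆ S)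
      rw [Finset.card_univ, ZMod.card] at h
      omega
    rw [SimpleGraph.connected_iff_exists_forall_reachable]
    refine ⟨⟨r, by simpa using hr⟩, ?_⟩
    rintro ⟨w, hw⟩
    set G := H.induce ((S : Set (ZMod (2 * m + 1)))ᶜ) with hG
    let root : ((S : Set (ZMod (2 * m + 1)))ᶜ : Set _) := ⟨r, by simpa using hr⟩
    let c : ℕ → Prop := fun x => ∃ h : (x : ZMod (2 * m + 1)) ∈ ((S : Set (ZMod (2 * m + 1)))ᶜ),
      G.Reachable root ⟨x, h⟩
    have hout : ∀ x : ℕ, x ≤ 2 * m → x ≠ a → x ≠ b →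
        (x : ZMod (2 * m + 1)) ∈ ((S : Set (ZMod (2 * m + 1)))ᶜ) := by
      intro x hx hxa hxb hxS
      rcases (hmem x hx).mp hxS with h | h
      · exact hxa h
      · exact hxb h
    have step : ∀ x y : ℕ, x ≤ 2 * m → y ≤ 2 * m → H.Adj (x : ZMod (2 * m + 1)) y →
        x ≠ a → x ≠ b → y ≠ a → y ≠ b → (c x ↔ c y) := by
      intro x y hx hy hadj hxa hxb hya hyb
      have hx' := hout x hx hxa hxb
      have hy' := hout y hy hya hyb
      have hG' : G.Adj ⟨x, hx'⟩ ⟨y, hy'⟩ := hadj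
      exact ⟨fun ⟨_, h⟩ => ⟨hy', h.trans hG'.reachable⟩,
        fun ⟨_, h⟩ => ⟨hx', h.trans hG'.symm.reachable⟩⟩
    obtain ⟨k, hk, rfl⟩ := hcast r
    obtain ⟨l, hl, rfl⟩ := hcast w
    have hka : ¬(k = a ∨ k = b) := fun h => hr ((hmem k hk).mpr h)
    have hla : ¬(l = a ∨ l = b) := fun h => hw ((hmem l hl).mpr h)
    have hconst := oddAug_const m a b hm c hab hb
      (fun x hx => step x (x + 1) (by omega) hx (e1 x hx))
      (step 0 (2 * m) (by omega) le_rfl e2)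
      (fun x hx hxm => step x (x + m) (by omega) (by omega) (e3 x hx hxm))
      (step 0 (m + 1) (by omega) (by omega) e4)
      k l hk hl (by omega) (by omega) (by omega) (by omega)
    obtain ⟨_, h⟩ := hconst.mp ⟨root.2, SimpleGraph.Reachable.refl _⟩
    exact h
  · obtain ⟨k, hk, rfl⟩ := hcast v
    have deg : ∀ x y z : ℕ, x ≤ 2 * m → y ≤ 2 * m → z ≤ 2 * m → x ≠ y → x ≠ z → y ≠ z →
        H.Adj (k : ZMod (2 * m + 1)) x → H.Adj (k : ZMod (2 * m + 1)) y →
        H.Adj (k : ZMod (2 * m + 1)) z → 3 ≤ degN H (k : ZMod (2 * m + 1)) :=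
      fun x y z hx hy hz hxy hxz hyz ax ay az =>
        three_le_degN H _ x y z ax ay az (fun h => hxy (hinj x y hx hy h))
          (fun h => hxz (hinj x z hx hz h)) (fun h => hyz (hinj y z hy hz h))
    have pred : 1 ≤ k → H.Adj (k : ZMod (2 * m + 1)) ((k - 1 : ℕ) : ZMod _) := by
      intro h
      have := e1 (k - 1) (by omega)
      rw [show k - 1 + 1 = k by omega] at this
      exact this.symm
    have back : m < k → H.Adj (k : ZMod (2 * m + 1)) ((k - m : ℕ) : ZMod _) := by
      intro h
      have := e3 (k - m) (by omega) (by omega)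
      rw [show k - m + m = k by omega] at this
      exact this.symm
    rcases Nat.eq_zero_or_pos k with h0 | h0
    · subst h0
      exact deg 1 (2 * m) (m + 1) (by omega) (by omega) (by omega) (by omega) (by omega)
        (by omega) (e1 0 (by omega)) e2 e4
    by_cases hkm : k ≤ m
    · exact deg (k - 1) (k + 1) (k + m) (by omega) (by omega) (by omega) (by omega) (by omega)
        (by omega) (pred h0) (e1 k (by omega)) (e3 k h0 hkm)
    by_cases hk2 : k = 2 * m
    · refine deg (k - 1) 0 (k - m) (by omega) (by omega) (by omega) (by omega) (by omega)
        (by omega) (pred h0) ?_ (back (by omega))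
      rw [hk2]
      exact e2.symm
    · exact deg (k - 1) (k + 1) (k - m) (by omega) (by omega) (by omega) (by omega) (by omega)
        (by omega) (pred h0) (e1 k (by omega)) (back (by omega))
end
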